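/- arXiv:1603.06750 — 7 statements merged into one kernel-verified Lean document; each statement's English description precedes it below -/
import Mathlib

section
/- Let H be a real Hilbert space, let J be a countable index set, let (V_k)_{k∈J} be a family of closed subspaces of H, and for each k let Q_k : H → H be the orthogonal projection onto the orthogonal complement V_k^⊥. Set V := ⋂_{k∈J} V_k and let P : H → H be the orthogonal projection onto V. Assume that for every x ∈ H the series S x := ∑_{k∈J} Q_k x converges in H and that S defines a bounded linear operator on H. Then for every real γ with 0 < γ < 2/‖S‖ and every x ∈ H, the sequence (I − γ S)^M x converges to P x in H as M → ∞. -/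
open Filter
open scoped RealInnerProductSpace

/-!
The sum `S` is a positive operator whose kernel is `⨅ k, V k`, because `re ⟪S x, x⟫` is the sum of
the nonnegative terms `re ⟪Q k x, x⟫ = ‖Q k x‖ ^ 2`. For a positive operator
`‖S x‖ ^ 2 ≤ ‖S‖ * re ⟪S x, x⟫`, so the step `T = 1 - γ S` satisfies
`‖T x‖ ^ 2 ≤ ‖x‖ ^ 2 - γ (2 - γ ‖S‖) re ⟪S x, x⟫`. Hence `T` is a contraction, and along each orbit
the squared norms decrease to a limit, which forces `S (T ^ n x) → 0`. As `T` commutes with `S`,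
this says that `T ^ n` tends to zero pointwise on the range of `S`, hence on its closure
`(ker S)ᗮ`, whereas `T` is the identity on `ker S`.
-/

open RCLike Topology
open scoped InnerProductSpace

theorem tendsto_zero_of_le_sub_succ {a e : ℕ → ℝ} (ha : ∀ n, 0 ≤ a n) (he : ∀ n, 0 ≤ e n)
    (hea : ∀ n, e n ≤ a n - a (n + 1)) : Tendsto e atTop (𝓝 0) := by
  have ha_anti : Antitone a := antitone_nat_of_succ_le fun n => by linarith [he n, hea n]
  have ha_bdd : BddBelow (Set.range a) := ⟨0, Set.forall_mem_range.2 ha⟩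
  have ha_lim := tendsto_atTop_ciInf ha_anti ha_bdd
  have ha_sub : Tendsto (fun n => a n - a (n + 1)) atTop (𝓝 0) := by
    simpa only [sub_self] using ha_lim.sub ((tendsto_add_atTop_iff_nat 1).2 ha_lim)
  exact squeeze_zero he hea ha_sub

theorem pow_one_sub_smul_apply_of_mem_ker {R M : Type*} [CommRing R] [AddCommGroup M] [Module R M]
    [TopologicalSpace M] [IsTopologicalAddGroup M] [ContinuousConstSMul R M] {S : M →L[R] M} (c : R)
    {z : M} (hz : z ∈ S.ker) (n : ℕ) : ((1 - c • S) ^ n) z = z := by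
  have hSz : S z = 0 := hz
  have hfix : Function.IsFixedPt ⇑(1 - c • S) z := by simp [Function.IsFixedPt, hSz]
  rw [FunLike.coe_pow_eq_iterate]
  exact hfix.iterate n

section Contraction

variable {𝕜 E : Type*} [NontriviallyNormedField 𝕜] [SeminormedAddCommGroup E] [NormedSpace 𝕜 E]

theorem tendsto_pow_apply_zero_of_mem_closure {T : E →L[𝕜] E} (hT : ‖T‖ ≤ 1) {s : Set E}
    (hs : ∀ y ∈ s, Tendsto (fun n : ℕ => (T ^ n) y) atTop (𝓝 0)) {x : E} (hx : x ∈ closure s) :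
    Tendsto (fun n : ℕ => (T ^ n) x) atTop (𝓝 0) := by
  have hpow (n : ℕ) : ‖T ^ n‖ ≤ 1 := by
    induction n with
    | zero => exact ContinuousLinearMap.norm_id_le
    | succ n ih =>
      rw [pow_succ]
      exact (norm_mul_le _ _).trans (mul_le_one₀ ih (norm_nonneg _) hT)
  have hequi : Equicontinuous fun n : ℕ => ⇑(T ^ n) :=
    (LipschitzWith.uniformEquicontinuous _ 1 fun n =>
      (T ^ n).lipschitz.weaken (hpow n)).equicontinuous
  exact closure_minimal hs (hequi.isClosed_setOfPred_tendsto continuous_const) hx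

end Contraction

section Positive

variable {𝕜 E : Type*} [RCLike 𝕜] [NormedAddCommGroup E] [InnerProductSpace 𝕜 E]
  {S : E →L[𝕜] E}

theorem norm_apply_sq_le_of_isPositive (hS : S.IsPositive) (x : E) :
    ‖S x‖ ^ 2 ≤ ‖S‖ * re ⟪S x, x⟫_𝕜 := by
  rcases (norm_nonneg S).eq_or_lt' with hS0 | hS0
  · simp [norm_eq_zero.1 hS0]
  have hSS : re ⟪S (S x), S x⟫_𝕜 ≤ ‖S‖ * ‖S x‖ ^ 2 :=
    calc re ⟪S (S x), S x⟫_𝕜 ≤ ‖S (S x)‖ * ‖S x‖ := re_inner_le_norm _ _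
      _ ≤ ‖S‖ * ‖S x‖ * ‖S x‖ := by gcongr; exact S.le_opNorm _
      _ = ‖S‖ * ‖S x‖ ^ 2 := by ring
  -- The test vector is `‖S‖` times the gradient step `x - ‖S‖⁻¹ • S x`; scaling avoids inverses.
  have hexpand : re ⟪S ((‖S‖ : 𝕜) • x - S x), (‖S‖ : 𝕜) • x - S x⟫_𝕜
      = ‖S‖ ^ 2 * re ⟪S x, x⟫_𝕜 - 2 * ‖S‖ * ‖S x‖ ^ 2 + re ⟪S (S x), S x⟫_𝕜 := by
    simp only [map_sub, map_smul, inner_sub_left, inner_sub_right, inner_smul_left,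
      inner_smul_right, conj_ofReal, re_ofReal_mul, hS.inner_left_eq_inner_right (S x) x,
      inner_self_eq_norm_sq]
    ring
  have hnonneg := hS.re_inner_nonneg_left ((‖S‖ : 𝕜) • x - S x)
  refine le_of_mul_le_mul_left ?_ hS0
  linarith

theorem apply_eq_zero_iff_re_inner_eq_zero_of_isPositive (hS : S.IsPositive) {x : E} :
    S x = 0 ↔ re ⟪S x, x⟫_𝕜 = 0 := by
  refine ⟨fun h => by simp [h], fun h => ?_⟩
  have hle := norm_apply_sq_le_of_isPositive hS x
  rw [h, mul_zero] at hle
  exact norm_eq_zero.1 (pow_eq_zero_iff two_ne_zero |>.1 (hle.antisymm (sq_nonneg _)))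

theorem isPositive_starProjection (K : Submodule 𝕜 E) [K.HasOrthogonalProjection] :
    K.starProjection.IsPositive :=
  ⟨K.starProjection_isSymmetric, K.re_inner_starProjection_nonneg⟩

section Sum

variable {J : Type*} {A : J → E →L[𝕜] E}

theorem hasSum_re_inner_apply_self (hAS : ∀ x, HasSum (fun k => A k x) (S x)) (x : E) :
    HasSum (fun k => re ⟪A k x, x⟫_𝕜) (re ⟪S x, x⟫_𝕜) := by
  simpa only [innerSL_apply_apply, reCLM_apply, inner_re_symm x] using
    reCLM.hasSum ((innerSL 𝕜 x).hasSum (hAS x))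

theorem isPositive_of_hasSum_apply (hA : ∀ k, (A k).IsPositive)
    (hAS : ∀ x, HasSum (fun k => A k x) (S x)) : S.IsPositive := by
  refine ⟨fun x y => ?_, fun x =>
    (hasSum_re_inner_apply_self hAS x).nonneg fun k => (hA k).re_inner_nonneg_left x⟩
  have hleft : HasSum (fun k => ⟪A k x, y⟫_𝕜) ⟪S x, y⟫_𝕜 := (innerSLFlip 𝕜 y).hasSum (hAS x)
  have hright : HasSum (fun k => ⟪x, A k y⟫_𝕜) ⟪x, S y⟫_𝕜 := (innerSL 𝕜 x).hasSum (hAS y)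
  simp only [← (hA _).inner_left_eq_inner_right] at hright
  exact hleft.unique hright

theorem ker_eq_iInf_ker_of_hasSum_apply (hA : ∀ k, (A k).IsPositive)
    (hAS : ∀ x, HasSum (fun k => A k x) (S x)) : S.ker = ⨅ k, (A k).ker := by
  ext x
  have hsum := hasSum_re_inner_apply_self hAS x
  simp only [Submodule.mem_iInf, LinearMap.mem_ker, ContinuousLinearMap.coe_coe,
    apply_eq_zero_iff_re_inner_eq_zero_of_isPositive (isPositive_of_hasSum_apply hA hAS),
    apply_eq_zero_iff_re_inner_eq_zero_of_isPositive (hA _)]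
  have hterms : HasSum (fun k => re ⟪A k x, x⟫_𝕜) 0 ↔ ∀ k, re ⟪A k x, x⟫_𝕜 = 0 :=
    (hasSum_zero_iff_of_nonneg fun k => (hA k).re_inner_nonneg_left x).trans funext_iff
  rw [← hterms]
  exact ⟨fun h => h ▸ hsum, hsum.unique⟩

end Sum

section Iteration

variable {γ : ℝ}

theorem norm_one_sub_smul_apply_sq_le (hS : S.IsPositive) (γ : ℝ) (x : E) :
    ‖(1 - (γ : 𝕜) • S) x‖ ^ 2 ≤ ‖x‖ ^ 2 - γ * (2 - γ * ‖S‖) * re ⟪S x, x⟫_𝕜 := by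
  have hexpand : ‖(1 - (γ : 𝕜) • S) x‖ ^ 2
      = ‖x‖ ^ 2 - 2 * γ * re ⟪S x, x⟫_𝕜 + γ ^ 2 * ‖S x‖ ^ 2 := by
    change ‖x - (γ : 𝕜) • S x‖ ^ 2 = _
    rw [norm_sub_sq (𝕜 := 𝕜), inner_smul_right, re_ofReal_mul, norm_smul, mul_pow, norm_ofReal,
      sq_abs, inner_re_symm]
    ring
  have hbound := mul_le_mul_of_nonneg_left (norm_apply_sq_le_of_isPositive hS x) (sq_nonneg γ)
  linarith

theorem norm_one_sub_smul_le_one (hS : S.IsPositive) (hγ : 0 ≤ γ) (hγS : γ * ‖S‖ ≤ 2) :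
    ‖1 - (γ : 𝕜) • S‖ ≤ 1 := by
  refine ContinuousLinearMap.opNorm_le_bound _ zero_le_one fun x => ?_
  have hdrop : 0 ≤ γ * (2 - γ * ‖S‖) * re ⟪S x, x⟫_𝕜 :=
    mul_nonneg (mul_nonneg hγ (sub_nonneg.2 hγS)) (hS.re_inner_nonneg_left x)
  rw [one_mul]
  refine le_of_sq_le_sq ?_ (norm_nonneg x)
  linarith [norm_one_sub_smul_apply_sq_le hS γ x]

theorem tendsto_re_inner_pow_one_sub_smul_apply (hS : S.IsPositive) (hγ : 0 < γ)
    (hγS : γ * ‖S‖ < 2) (x : E) :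
    Tendsto (fun n : ℕ => re ⟪S (((1 - (γ : 𝕜) • S) ^ n) x), ((1 - (γ : 𝕜) • S) ^ n) x⟫_𝕜)
      atTop (𝓝 0) := by
  set T := 1 - (γ : 𝕜) • S
  have hc : 0 < γ * (2 - γ * ‖S‖) := mul_pos hγ (sub_pos.2 hγS)
  have hdecrease (n : ℕ) : γ * (2 - γ * ‖S‖) * re ⟪S ((T ^ n) x), (T ^ n) x⟫_𝕜
      ≤ ‖(T ^ n) x‖ ^ 2 - ‖(T ^ (n + 1)) x‖ ^ 2 := by
    rw [pow_succ' T]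
    exact le_sub_comm.1 (norm_one_sub_smul_apply_sq_le hS γ ((T ^ n) x))
  have hlim := tendsto_zero_of_le_sub_succ (fun n => sq_nonneg ‖(T ^ n) x‖)
    (fun n => mul_nonneg hc.le (hS.re_inner_nonneg_left _)) hdecrease
  simpa only [inv_mul_cancel_left₀ hc.ne', mul_zero] using
    hlim.const_mul (γ * (2 - γ * ‖S‖))⁻¹

theorem tendsto_pow_one_sub_smul_apply_of_mem_range (hS : S.IsPositive) (hγ : 0 < γ)
    (hγS : γ * ‖S‖ < 2) {y : E} (hy : y ∈ S.range) :
    Tendsto (fun n : ℕ => ((1 - (γ : 𝕜) • S) ^ n) y) atTop (𝓝 0) := by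
  obtain ⟨x, rfl⟩ := hy
  set T := 1 - (γ : 𝕜) • S
  have hcomm (n : ℕ) : (T ^ n) (S x) = S ((T ^ n) x) :=
    have : Commute T S := (Commute.one_left S).sub_left ((Commute.refl S).smul_left _)
    DFunLike.congr_fun (this.pow_left n).eq x
  have hsq : Tendsto (fun n : ℕ => ‖S ((T ^ n) x)‖ ^ 2) atTop (𝓝 0) :=
    squeeze_zero (fun _ => sq_nonneg _) (fun _ => norm_apply_sq_le_of_isPositive hS _) <| by
      simpa only [mul_zero] using
        (tendsto_re_inner_pow_one_sub_smul_apply hS hγ hγS x).const_mul ‖S‖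
  simp only [ContinuousLinearMap.coe_coe, hcomm]
  rw [tendsto_zero_iff_norm_tendsto_zero]
  simpa only [Real.sqrt_sq (norm_nonneg _), Real.sqrt_zero] using hsq.sqrt

theorem tendsto_pow_one_sub_smul_apply [CompleteSpace E] (hS : S.IsPositive) (hγ : 0 < γ)
    (hγS : γ * ‖S‖ < 2) (x : E) :
    Tendsto (fun n : ℕ => ((1 - (γ : 𝕜) • S) ^ n) x) atTop (𝓝 (S.ker.starProjection x)) := by
  have hmem : x - S.ker.starProjection x ∈ S.range.topologicalClosure := by
    rw [← Submodule.orthogonal_orthogonal_eq_closure, hS.isSymmetric.orthogonal_range]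
    exact Submodule.sub_starProjection_mem_orthogonal x
  have hzero := tendsto_pow_apply_zero_of_mem_closure
    (norm_one_sub_smul_le_one hS hγ.le hγS.le)
    (fun _ => tendsto_pow_one_sub_smul_apply_of_mem_range hS hγ hγS) hmem
  simpa only [map_sub, sub_add_cancel, zero_add,
    pow_one_sub_smul_apply_of_mem_ker _ (Submodule.starProjection_apply_mem _ x)]
    using hzero.add_const (S.ker.starProjection x)

end Iteration

end Positive

theorem method_of_reflections_pointwise_general
    {𝕜 H : Type*} [RCLike 𝕜] [NormedAddCommGroup H] [InnerProductSpace 𝕜 H] [CompleteSpace H]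
    {J : Type*} (V : J → Submodule 𝕜 H) (Q : J → H →L[𝕜] H)
    (hQ : ∀ k (x : H), Q k x ∈ (V k)ᗮ ∧ x - Q k x ∈ V k)
    (P : H →L[𝕜] H) (hP : ∀ x : H, P x ∈ (⨅ k, V k) ∧ x - P x ∈ (⨅ k, V k)ᗮ)
    (S : H →L[𝕜] H) (hS : ∀ x : H, HasSum (fun k => Q k x) (S x))
    {γ : ℝ} (hγ : 0 < γ) (hγS : γ * ‖S‖ < 2) (x : H) :
    Tendsto (fun M : ℕ => ((1 - (γ : 𝕜) • S) ^ M) x) atTop (𝓝 (P x)) := by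
  have hV (k : J) : (V k).HasOrthogonalProjection :=
    ⟨fun x => ⟨x - Q k x, (hQ k x).2, by simpa only [sub_sub_cancel] using (hQ k x).1⟩⟩
  have hQ_eq (k : J) : Q k = (V k)ᗮ.starProjection := by
    ext x
    exact (Submodule.eq_starProjection_of_mem_orthogonal (hQ k x).1
      ((V k).le_orthogonal_orthogonal (hQ k x).2)).symm
  have hQ_pos (k : J) : (Q k).IsPositive := hQ_eq k ▸ isPositive_starProjection _
  have hker : S.ker = ⨅ k, V k := by
    simp only [ker_eq_iInf_ker_of_hasSum_apply hQ_pos hS, hQ_eq, Submodule.ker_starProjection,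
      Submodule.orthogonal_orthogonal]
  have hP_eq : S.ker.starProjection x = P x :=
    Submodule.eq_starProjection_of_mem_orthogonal (hker ▸ (hP x).1) (hker ▸ (hP x).2)
  exact hP_eq ▸ tendsto_pow_one_sub_smul_apply (isPositive_of_hasSum_apply hQ_pos hS) hγ hγS x

/-- **Method of reflections, pointwise convergence (Proposition on abstract projections).**
Let `H` be a real Hilbert space, `(V k)` a countable family of closed subspaces,
`Q k` the orthogonal projection onto `(V k)ᗮ`, `P` the orthogonal projection onto
`V := ⨅ k, V k`.  If `S x = ∑ k, Q k x` converges for every `x` and defines a bounded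
operator, then for every `0 < γ < 2 / ‖S‖`, `(I - γ S)^M x → P x`. -/
theorem method_of_reflections_pointwise
    {H : Type*} [NormedAddCommGroup H] [InnerProductSpace ℝ H] [CompleteSpace H]
    {J : Type*} [Countable J] (V : J → Submodule ℝ H)
    (hVclosed : ∀ k, IsClosed ((V k : Set H)))
    (Q : J → H →L[ℝ] H)
    (hQ : ∀ k (x : H), Q k x ∈ (V k)ᗮ ∧ x - Q k x ∈ V k)
    (P : H →L[ℝ] H)
    (hP : ∀ x : H, P x ∈ (⨅ k, V k) ∧ x - P x ∈ (⨅ k, V k)ᗮ)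
    (S : H →L[ℝ] H)
    (hS : ∀ x : H, HasSum (fun k => Q k x) (S x))
    (γ : ℝ) (hγ0 : 0 < γ) (hγ2 : γ < 2 / ‖S‖) (x : H) :
    Tendsto (fun M : ℕ => ((1 - γ • S) ^ M) x) atTop (nhds (P x)) := by
  have hS0 : 0 < ‖S‖ := (div_pos_iff_of_pos_left two_pos).1 (hγ0.trans hγ2)
  exact method_of_reflections_pointwise_general V Q hQ P hP S hS hγ0 ((lt_div_iff₀ hS0).1 hγ2) x
end

section
/- Let H be a real Hilbert space, let J be a countable index set, let (V_k)_{k∈J} be a family of closed subspaces of H, and for each k let Q_k : H → H be the orthogonal projection onto V_k^⊥. Set V := ⋂_{k∈J} V_k and let P be the orthogonal projection onto V. Assume that for every x ∈ H the series S x := ∑_{k∈J} Q_k x converges in H, that S defines a bounded linear operator on H, and that there exists c > 0 such that ⟨S x, x⟩ ≥ c ‖x‖² for all x ∈ V^⊥. Then for every real γ with 0 < γ < 2/‖S‖ and every M ∈ ℕ, the operator norm satisfies ‖(I − γ S)^M − P‖ ≤ (max{1 − γ c, γ ‖S‖ − 1})^M. -/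
open Filter
open scoped RealInnerProductSpace

/-!
The operator `S` is symmetric and vanishes on `V`, and its quadratic form lies between `c ‖x‖²` and
`‖S‖ ‖x‖²` on `Vᗮ`. Hence `1 - γ S - P` is symmetric with quadratic form bounded in absolute value
by `max (1 - γ c) (γ ‖S‖ - 1) ‖x‖²`, and for a symmetric operator this bounds the norm. Since
`1 - γ S` fixes `V` and commutes with `P`, one has `(1 - γ S) ^ M - P = (1 - γ S - P) ^ M` for
`M ≥ 1`, and the estimate follows from submultiplicativity of the norm.
-/

theorem pow_sub_eq_sub_pow_of_mul_eq {R : Type*} [Ring R] {t p : R} (hp : IsIdempotentElem p)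
    (htp : t * p = p) (hpt : p * t = p) {n : ℕ} (hn : n ≠ 0) : t ^ n - p = (t - p) ^ n := by
  have hcomm : Commute t p := htp.trans hpt.symm
  have hpow : t ^ n * p = p := by rw [← hp.pow_eq hn, ← hcomm.mul_pow, htp]
  calc t ^ n - p = t ^ n * (1 - p) ^ n := by rw [hp.one_sub.pow_eq hn, mul_one_sub, hpow]
    _ = (t - p) ^ n := by
      rw [← ((Commute.one_right t).sub_right hcomm).mul_pow, mul_one_sub, htp]

theorem max_one_sub_mul_nonneg {c γ s : ℝ} (hγ : 0 ≤ γ) (hcs : c ≤ s) :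
    0 ≤ max (1 - γ * c) (γ * s - 1) := by
  have hmul : γ * c ≤ γ * s := by gcongr
  rcases le_total (γ * c) 1 with h | h
  · exact le_max_of_le_left (by linarith)
  · exact le_max_of_le_right (by linarith)

theorem iInf_le_ker_of_hasSum {R E F J : Type*} [Semiring R] [AddCommMonoid E] [Module R E]
    [AddCommMonoid F] [Module R F] [TopologicalSpace F] [T2Space F] {V : J → Submodule R E}
    {A : J → E →ₗ[R] F} {S : E →ₗ[R] F} (hV : ∀ k, V k ≤ (A k).ker)
    (hS : ∀ x, HasSum (fun k => A k x) (S x)) : ⨅ k, V k ≤ S.ker := by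
  intro v hv
  have hA : ∀ k, A k v = 0 := fun k => hV k ((Submodule.mem_iInf _).mp hv k)
  have hsum : HasSum (fun _ : J => (0 : F)) (S v) := by simpa only [hA] using hS v
  exact hsum.unique hasSum_zero

section SymmetricOperator

open RCLike

variable {𝕜 H : Type*} [RCLike 𝕜] [NormedAddCommGroup H] [InnerProductSpace 𝕜 H]

theorem re_inner_apply_self_le_opNorm_mul_sq (T : H →L[𝕜] H) (x : H) :
    re (inner 𝕜 (T x) x) ≤ ‖T‖ * ‖x‖ ^ 2 :=
  calc re (inner 𝕜 (T x) x) ≤ ‖T x‖ * ‖x‖ := re_inner_le_norm _ _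
    _ ≤ ‖T‖ * ‖x‖ * ‖x‖ := by gcongr; exact T.le_opNorm x
    _ = ‖T‖ * ‖x‖ ^ 2 := by ring

theorem opNorm_le_of_abs_re_inner_apply_self_le {T : H →L[𝕜] H} (hT : T.IsSymmetric) {ρ : ℝ}
    (hρ : 0 ≤ ρ) (h : ∀ x, |re (inner 𝕜 (T x) x)| ≤ ρ * ‖x‖ ^ 2) : ‖T‖ ≤ ρ := by
  rw [T.norm_eq_iSup_rayleighQuotient hT]
  refine ciSup_le fun x => ?_
  rw [abs_div, abs_sq, T.reApplyInnerSelf_apply]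
  exact div_le_of_le_mul₀ (sq_nonneg _) hρ (h x)

theorem isSymmetric_of_hasSum {J : Type*} {A : J → H →ₗ[𝕜] H} {S : H →ₗ[𝕜] H}
    (hA : ∀ k, (A k).IsSymmetric) (hS : ∀ x, HasSum (fun k => A k x) (S x)) :
    S.IsSymmetric := by
  intro x y
  have hleft : HasSum (fun k => inner 𝕜 (A k x) y) (inner 𝕜 (S x) y) :=
    (hS x).mapL (innerSLFlip 𝕜 y)
  have hright : HasSum (fun k => inner 𝕜 x (A k y)) (inner 𝕜 x (S y)) :=
    (hS y).mapL (innerSL 𝕜 x)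
  simp only [hA _ x y] at hleft
  exact hleft.unique hright

section Contraction

variable {W : Submodule 𝕜 H} [W.HasOrthogonalProjection] {S : H →L[𝕜] H} {c γ : ℝ}

theorem apply_starProjection_orthogonal_of_le_ker (hW : W ≤ S.ker) (x : H) :
    S (Wᗮ.starProjection x) = S x := by
  have hPx : S (W.starProjection x) = 0 := hW (W.starProjection_apply_mem x)
  rw [W.starProjection_orthogonal_val, map_sub, hPx, sub_zero]

theorem inner_apply_starProjection_orthogonal_of_le_ker (hS : S.IsSymmetric) (hW : W ≤ S.ker)
    (x : H) :
    inner 𝕜 (S (Wᗮ.starProjection x)) (Wᗮ.starProjection x) = inner 𝕜 (S x) x := by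
  rw [hS.apply_clm, apply_starProjection_orthogonal_of_le_ker hW, ← hS.apply_clm,
    apply_starProjection_orthogonal_of_le_ker hW]

theorem starProjection_mul_eq_zero_of_le_ker (hS : S.IsSymmetric) (hW : W ≤ S.ker) :
    W.starProjection * S = 0 := by
  ext x
  refine W.starProjection_apply_eq_zero_iff.mpr fun w hw => ?_
  have hSw : S w = 0 := hW hw
  exact (hS.apply_clm w x).symm.trans (by rw [hSw, inner_zero_left])

theorem mul_starProjection_eq_zero_of_le_ker (hW : W ≤ S.ker) : S * W.starProjection = 0 := by
  ext x
  exact hW (W.starProjection_apply_mem x)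

theorem coercivity_const_le_opNorm (hW : W ≤ S.ker) (hS0 : S ≠ 0)
    (hcoer : ∀ x ∈ Wᗮ, c * ‖x‖ ^ 2 ≤ re (inner 𝕜 (S x) x)) : c ≤ ‖S‖ := by
  obtain ⟨x, hx⟩ : ∃ x, S x ≠ 0 := DFunLike.ne_iff.mp hS0
  have hne : Wᗮ.starProjection x ≠ 0 := fun h =>
    hx (by rw [← apply_starProjection_orthogonal_of_le_ker hW, h, map_zero])
  have hquad : c * ‖Wᗮ.starProjection x‖ ^ 2 ≤ ‖S‖ * ‖Wᗮ.starProjection x‖ ^ 2 :=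
    (hcoer _ (Wᗮ.starProjection_apply_mem x)).trans (re_inner_apply_self_le_opNorm_mul_sq S _)
  exact le_of_mul_le_mul_right hquad (by positivity)

theorem re_inner_one_sub_smul_sub_starProjection (hS : S.IsSymmetric) (hW : W ≤ S.ker) (x : H) :
    re (inner 𝕜 ((1 - (γ : 𝕜) • S - W.starProjection) x) x) =
      ‖Wᗮ.starProjection x‖ ^ 2 -
        γ * re (inner 𝕜 (S (Wᗮ.starProjection x)) (Wᗮ.starProjection x)) := by
  have hproj : re (inner 𝕜 (Wᗮ.starProjection x) x) = ‖Wᗮ.starProjection x‖ ^ 2 :=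
    Wᗮ.re_inner_starProjection_eq_normSq x
  have hsplit : (1 - (γ : 𝕜) • S - W.starProjection) x =
      Wᗮ.starProjection x - (γ : 𝕜) • S x := by
    rw [sub_right_comm, ← W.starProjection_orthogonal']
    rfl
  rw [hsplit, inner_sub_left, map_sub, hproj, inner_smul_left, conj_ofReal, re_ofReal_mul,
    inner_apply_starProjection_orthogonal_of_le_ker hS hW]

theorem norm_one_sub_smul_sub_starProjection_le (hS : S.IsSymmetric) (hW : W ≤ S.ker)
    (hS0 : S ≠ 0) (hcoer : ∀ x ∈ Wᗮ, c * ‖x‖ ^ 2 ≤ re (inner 𝕜 (S x) x)) (hγ : 0 ≤ γ) :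
    ‖1 - (γ : 𝕜) • S - W.starProjection‖ ≤ max (1 - γ * c) (γ * ‖S‖ - 1) := by
  have hρ := max_one_sub_mul_nonneg hγ (coercivity_const_le_opNorm hW hS0 hcoer)
  have hsymm : (1 - (γ : 𝕜) • S - W.starProjection).IsSymmetric :=
    (LinearMap.IsSymmetric.one.sub (hS.smul (conj_ofReal γ))).sub W.starProjection_isSymmetric
  refine opNorm_le_of_abs_re_inner_apply_self_le hsymm hρ fun x => ?_
  set u := Wᗮ.starProjection x with hu
  have hlower : γ * (c * ‖u‖ ^ 2) ≤ γ * re (inner 𝕜 (S u) u) := by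
    gcongr
    exact hcoer u (Wᗮ.starProjection_apply_mem x)
  have hupper : γ * re (inner 𝕜 (S u) u) ≤ γ * (‖S‖ * ‖u‖ ^ 2) := by
    gcongr
    exact re_inner_apply_self_le_opNorm_mul_sq S u
  calc |re (inner 𝕜 ((1 - (γ : 𝕜) • S - W.starProjection) x) x)|
      = |‖u‖ ^ 2 - γ * re (inner 𝕜 (S u) u)| := by
        rw [re_inner_one_sub_smul_sub_starProjection hS hW, hu]
    _ ≤ max ((1 - γ * c) * ‖u‖ ^ 2) ((γ * ‖S‖ - 1) * ‖u‖ ^ 2) :=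
        abs_eq_max_neg.trans_le (max_le_max (by linarith) (by linarith))
    _ = max (1 - γ * c) (γ * ‖S‖ - 1) * ‖u‖ ^ 2 := (max_mul_of_nonneg _ _ (sq_nonneg _)).symm
    _ ≤ max (1 - γ * c) (γ * ‖S‖ - 1) * ‖x‖ ^ 2 := by
        gcongr
        exact Wᗮ.norm_starProjection_apply_le x

theorem norm_one_sub_smul_pow_sub_starProjection_le (hS : S.IsSymmetric) (hW : W ≤ S.ker)
    (hS0 : S ≠ 0) (hcoer : ∀ x ∈ Wᗮ, c * ‖x‖ ^ 2 ≤ re (inner 𝕜 (S x) x)) (hγ : 0 ≤ γ) (M : ℕ) :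
    ‖(1 - (γ : 𝕜) • S) ^ M - W.starProjection‖ ≤ max (1 - γ * c) (γ * ‖S‖ - 1) ^ M := by
  rcases eq_or_ne M 0 with rfl | hM
  · rw [pow_zero, pow_zero, ← W.starProjection_orthogonal']
    exact Wᗮ.starProjection_norm_le
  have hleft : (1 - (γ : 𝕜) • S) * W.starProjection = W.starProjection := by
    rw [sub_mul, one_mul, smul_mul_assoc, mul_starProjection_eq_zero_of_le_ker hW, smul_zero,
      sub_zero]
  have hright : W.starProjection * (1 - (γ : 𝕜) • S) = W.starProjection := by
    rw [mul_sub, mul_one, mul_smul_comm, starProjection_mul_eq_zero_of_le_ker hS hW, smul_zero,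
      sub_zero]
  rw [pow_sub_eq_sub_pow_of_mul_eq W.isIdempotentElem_starProjection hleft hright hM]
  refine (norm_pow_le' _ (Nat.pos_of_ne_zero hM)).trans ?_
  gcongr
  exact norm_one_sub_smul_sub_starProjection_le hS hW hS0 hcoer hγ

end Contraction

theorem exists_hasOrthogonalProjection_eq_starProjection {W : Submodule 𝕜 H} {P : H →L[𝕜] H}
    (hP : ∀ x, P x ∈ W ∧ x - P x ∈ Wᗮ) :
    ∃ _ : W.HasOrthogonalProjection, P = W.starProjection := by
  have hW : W.HasOrthogonalProjection := ⟨fun x => ⟨P x, hP x⟩⟩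
  refine ⟨hW, ContinuousLinearMap.ext fun x => ?_⟩
  exact (Submodule.eq_starProjection_of_mem_orthogonal (hP x).1 (hP x).2).symm

theorem isSymmetric_of_mem_orthogonal_of_sub_mem {W : Submodule 𝕜 H} {Q : H →L[𝕜] H}
    (hQ : ∀ x, Q x ∈ Wᗮ ∧ x - Q x ∈ W) : Q.IsSymmetric := by
  obtain ⟨_, rfl⟩ := exists_hasOrthogonalProjection_eq_starProjection fun x =>
    ⟨(hQ x).1, W.le_orthogonal_orthogonal (hQ x).2⟩
  exact Wᗮ.starProjection_isSymmetric

theorem le_ker_of_mem_orthogonal_of_sub_mem {W : Submodule 𝕜 H} {Q : H →L[𝕜] H}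
    (hQ : ∀ x, Q x ∈ Wᗮ ∧ x - Q x ∈ W) : W ≤ Q.ker := by
  obtain ⟨_, rfl⟩ := exists_hasOrthogonalProjection_eq_starProjection fun x =>
    ⟨(hQ x).1, W.le_orthogonal_orthogonal (hQ x).2⟩
  exact fun w hw => W.starProjection_orthogonal_apply_eq_zero hw

theorem method_of_reflections_opNorm_general {J : Type*} (V : J → Submodule 𝕜 H)
    (Q : J → H →L[𝕜] H) (hQ : ∀ k x, Q k x ∈ (V k)ᗮ ∧ x - Q k x ∈ V k)
    (P : H →L[𝕜] H) (hP : ∀ x, P x ∈ (⨅ k, V k) ∧ x - P x ∈ (⨅ k, V k)ᗮ)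
    (S : H →L[𝕜] H) (hS : ∀ x, HasSum (fun k => Q k x) (S x)) (hS0 : S ≠ 0)
    (c : ℝ) (hcoer : ∀ x ∈ (⨅ k, V k)ᗮ, c * ‖x‖ ^ 2 ≤ re (inner 𝕜 (S x) x))
    (γ : ℝ) (hγ : 0 ≤ γ) (M : ℕ) :
    ‖(1 - (γ : 𝕜) • S) ^ M - P‖ ≤ max (1 - γ * c) (γ * ‖S‖ - 1) ^ M := by
  obtain ⟨_, rfl⟩ := exists_hasOrthogonalProjection_eq_starProjection hP
  have hsymm : S.IsSymmetric :=
    isSymmetric_of_hasSum (fun k => isSymmetric_of_mem_orthogonal_of_sub_mem (hQ k)) hS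
  have hker : ⨅ k, V k ≤ S.ker :=
    iInf_le_ker_of_hasSum (fun k => le_ker_of_mem_orthogonal_of_sub_mem (hQ k)) hS
  exact norm_one_sub_smul_pow_sub_starProjection_le hsymm hker hS0 hcoer hγ M

end SymmetricOperator

/-- **Method of reflections, exponential convergence in operator norm.**
With `Q k` the orthogonal projection onto `(V k)ᗮ`, `P` the orthogonal projection onto
`V := ⨅ k, V k`, `S x = ∑ k, Q k x` bounded, and `⟨S x, x⟩ ≥ c ‖x‖²` on `Vᗮ`, one has
`‖(I - γS)^M - P‖ ≤ (max (1 - γ c) (γ‖S‖ - 1))^M` for `0 < γ < 2/‖S‖`. -/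
theorem method_of_reflections_opNorm
    {H : Type*} [NormedAddCommGroup H] [InnerProductSpace ℝ H] [CompleteSpace H]
    {J : Type*} [Countable J] (V : J → Submodule ℝ H)
    (hVclosed : ∀ k, IsClosed ((V k : Set H)))
    (Q : J → H →L[ℝ] H)
    (hQ : ∀ k (x : H), Q k x ∈ (V k)ᗮ ∧ x - Q k x ∈ V k)
    (P : H →L[ℝ] H)
    (hP : ∀ x : H, P x ∈ (⨅ k, V k) ∧ x - P x ∈ (⨅ k, V k)ᗮ)
    (S : H →L[ℝ] H)
    (hS : ∀ x : H, HasSum (fun k => Q k x) (S x))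
    (c : ℝ) (hc : 0 < c)
    (hcoer : ∀ x ∈ (⨅ k, V k)ᗮ, c * ‖x‖ ^ 2 ≤ ⟪S x, x⟫)
    (γ : ℝ) (hγ0 : 0 < γ) (hγ2 : γ < 2 / ‖S‖) (M : ℕ) :
    ‖(1 - γ • S) ^ M - P‖ ≤ (max (1 - γ * c) (γ * ‖S‖ - 1)) ^ M := by
  -- `2 / ‖S‖` is the junk value `0` when `S = 0`, which `0 < γ < 2 / ‖S‖` rules out.
  have hS0 : S ≠ 0 := by rintro rfl; simpa using hγ0.trans hγ2
  exact method_of_reflections_opNorm_general V Q hQ P hP S hS hS0 c hcoer γ hγ0.le M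
end

section
/- Let H be a real Hilbert space, let J be a countable index set, let (V_k)_{k∈J} be a family of closed subspaces of H, and for each k let Q_k : H → H be the orthogonal projection onto V_k^⊥. Set V := ⋂_{k∈J} V_k and let P be the orthogonal projection onto V. Let (γ_k)_{k∈J} be positive real numbers and assume that for every x ∈ H the series S x := ∑_{k∈J} γ_k Q_k x converges in H, that S defines a bounded linear operator on H, and that ‖S‖ < 2. Then for every x ∈ H, the sequence (I − S)^M x converges to P x in H as M → ∞. -/
open Filter
open scoped RealInnerProductSpace

/-!
The operator `S` is positive and its kernel is `⨅ k, V k`, so everything reduces to a fact about a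
positive operator with `‖S‖ < 2`: the powers of `T = 1 - S` converge strongly to the orthogonal
projection onto `S.ker`. Positivity at the vector `‖S‖ x - S x` gives `‖S x‖² ≤ ‖S‖ ⟪S x, x⟫`,
whence `‖T x‖² ≤ ‖x‖² - (2 - ‖S‖) ⟪S x, x⟫`. Thus `T` is a contraction, and since `‖Tⁿ x‖²`
decreases to a limit, `Tⁿ (S x) = S (Tⁿ x) → 0`. As `T` is contractive, `Tⁿ → 0` on the closure of
the range of `S`, which is `S.kerᗮ`, while `T` is the identity on `S.ker`.
-/

open scoped InnerProductSpace Topology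
open RCLike (re)

theorem isClosed_setOfPred_tendsto_pow_apply {𝕜 E : Type*} [NontriviallyNormedField 𝕜]
    [SeminormedAddCommGroup E] [NormedSpace 𝕜 E] {T : E →L[𝕜] E} (hT : ‖T‖ ≤ 1) (a : E) :
    IsClosed {x | Tendsto (fun n : ℕ => (T ^ n) x) atTop (𝓝 a)} := by
  have lipschitz : LipschitzWith 1 T := T.lipschitz.weaken hT
  have lipschitz_pow (n : ℕ) : LipschitzWith 1 (T ^ n) := by
    simpa using lipschitz.iterate n
  exact (LipschitzWith.uniformEquicontinuous _ 1 lipschitz_pow).equicontinuous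
    |>.isClosed_setOfPred_tendsto continuous_const

section InnerProductSpace

variable {𝕜 H J : Type*} [RCLike 𝕜] [NormedAddCommGroup H] [InnerProductSpace 𝕜 H]
  {S : H →L[𝕜] H}

theorem norm_apply_sq_le_norm_mul_re_inner (hS : S.IsPositive) (x : H) :
    ‖S x‖ ^ 2 ≤ ‖S‖ * re ⟪S x, x⟫_𝕜 := by
  rcases (norm_nonneg S).eq_or_lt with hS_zero | hS_pos
  · simp [norm_eq_zero.mp hS_zero.symm]
  have expand : re ⟪S ((‖S‖ : 𝕜) • x - S x), (‖S‖ : 𝕜) • x - S x⟫_𝕜 =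
      ‖S‖ * (‖S‖ * re ⟪S x, x⟫_𝕜) - 2 * (‖S‖ * ‖S x‖ ^ 2) + re ⟪S (S x), S x⟫_𝕜 := by
    simp only [map_sub, map_smul, inner_sub_left, inner_sub_right, inner_smul_left,
      inner_smul_right, RCLike.conj_ofReal, RCLike.re_ofReal_mul,
      hS.inner_left_eq_inner_right (S x) x, inner_self_eq_norm_sq]
    ring
  have inner_apply_apply_le : re ⟪S (S x), S x⟫_𝕜 ≤ ‖S‖ * ‖S x‖ ^ 2 :=
    calc re ⟪S (S x), S x⟫_𝕜 ≤ ‖S (S x)‖ * ‖S x‖ := re_inner_le_norm _ _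
      _ ≤ ‖S‖ * ‖S x‖ * ‖S x‖ := by gcongr; exact S.le_opNorm _
      _ = ‖S‖ * ‖S x‖ ^ 2 := by ring
  have nonneg := hS.re_inner_nonneg_left ((‖S‖ : 𝕜) • x - S x)
  refine le_of_mul_le_mul_left ?_ hS_pos
  linarith

theorem norm_one_sub_apply_sq_le (hS : S.IsPositive) (x : H) :
    ‖(1 - S) x‖ ^ 2 ≤ ‖x‖ ^ 2 - (2 - ‖S‖) * re ⟪S x, x⟫_𝕜 :=
  calc ‖(1 - S) x‖ ^ 2 = ‖x‖ ^ 2 - 2 * re ⟪S x, x⟫_𝕜 + ‖S x‖ ^ 2 := by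
        rw [sub_apply, one_apply_eq_self, norm_sub_sq (𝕜 := 𝕜), inner_re_symm]
    _ ≤ ‖x‖ ^ 2 - (2 - ‖S‖) * re ⟪S x, x⟫_𝕜 := by
        linarith [norm_apply_sq_le_norm_mul_re_inner hS x]

theorem norm_one_sub_le_one (hS : S.IsPositive) (hS_norm : ‖S‖ ≤ 2) : ‖1 - S‖ ≤ 1 := by
  refine ContinuousLinearMap.opNorm_le_bound _ zero_le_one fun x => ?_
  have drop_nonneg : 0 ≤ (2 - ‖S‖) * re ⟪S x, x⟫_𝕜 :=
    mul_nonneg (sub_nonneg.mpr hS_norm) (hS.re_inner_nonneg_left x)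
  rw [one_mul]
  refine le_of_sq_le_sq ?_ (norm_nonneg x)
  linarith [norm_one_sub_apply_sq_le hS x]

theorem two_sub_norm_mul_norm_apply_sq_le (hS : S.IsPositive) (hS_norm : ‖S‖ ≤ 2) (x : H) :
    (2 - ‖S‖) * ‖S x‖ ^ 2 ≤ ‖S‖ * (‖x‖ ^ 2 - ‖(1 - S) x‖ ^ 2) :=
  calc (2 - ‖S‖) * ‖S x‖ ^ 2 ≤ (2 - ‖S‖) * (‖S‖ * re ⟪S x, x⟫_𝕜) :=
        mul_le_mul_of_nonneg_left (norm_apply_sq_le_norm_mul_re_inner hS x)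
          (sub_nonneg.mpr hS_norm)
    _ = ‖S‖ * ((2 - ‖S‖) * re ⟪S x, x⟫_𝕜) := by ring
    _ ≤ ‖S‖ * (‖x‖ ^ 2 - ‖(1 - S) x‖ ^ 2) := by
        gcongr
        linarith [norm_one_sub_apply_sq_le hS x]

theorem tendsto_apply_pow_one_sub_apply_zero (hS : S.IsPositive) (hS_norm : ‖S‖ < 2) (x : H) :
    Tendsto (fun n : ℕ => S (((1 - S) ^ n) x)) atTop (𝓝 0) := by
  have pow_succ_apply (n : ℕ) : ((1 - S) ^ (n + 1)) x = (1 - S) (((1 - S) ^ n) x) := by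
    rw [pow_succ', mul_apply_eq_comp]
  have antitone : Antitone fun n : ℕ => ‖((1 - S) ^ n) x‖ ^ 2 := by
    refine antitone_nat_of_succ_le fun n => ?_
    rw [pow_succ_apply]
    gcongr
    simpa using (1 - S).le_of_opNorm_le (norm_one_sub_le_one hS hS_norm.le) (((1 - S) ^ n) x)
  have norm_sq_lim := tendsto_atTop_ciInf antitone ⟨0, by rintro _ ⟨n, rfl⟩; positivity⟩
  have decrement_lim : Tendsto
      (fun n : ℕ => ‖((1 - S) ^ n) x‖ ^ 2 - ‖((1 - S) ^ (n + 1)) x‖ ^ 2) atTop (𝓝 0) := by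
    simpa using norm_sq_lim.sub ((tendsto_add_atTop_iff_nat 1).mpr norm_sq_lim)
  have bound (n : ℕ) : ‖S (((1 - S) ^ n) x)‖ ^ 2 ≤
      ‖S‖ / (2 - ‖S‖) * (‖((1 - S) ^ n) x‖ ^ 2 - ‖((1 - S) ^ (n + 1)) x‖ ^ 2) := by
    rw [pow_succ_apply, div_mul_eq_mul_div, le_div_iff₀' (sub_pos.mpr hS_norm)]
    exact two_sub_norm_mul_norm_apply_sq_le hS hS_norm.le _
  have norm_apply_sq_lim : Tendsto (fun n : ℕ => ‖S (((1 - S) ^ n) x)‖ ^ 2) atTop (𝓝 0) :=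
    squeeze_zero (fun n => by positivity) bound (by simpa using decrement_lim.const_mul _)
  exact tendsto_zero_iff_norm_tendsto_zero.mpr (by simpa using norm_apply_sq_lim.sqrt)

theorem re_inner_apply_self_eq_zero_iff (hS : S.IsPositive) {x : H} :
    re ⟪S x, x⟫_𝕜 = 0 ↔ S x = 0 := by
  refine ⟨fun h => ?_, fun h => by simp [h]⟩
  simpa [h] using norm_apply_sq_le_norm_mul_re_inner hS x

theorem hasSum_inner_left {f : J → H} {a : H} (hf : HasSum f a) (y : H) :
    HasSum (fun k => ⟪f k, y⟫_𝕜) ⟪a, y⟫_𝕜 :=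
  hf.mapL (innerSLFlip 𝕜 y)

theorem hasSum_inner_right {f : J → H} {a : H} (hf : HasSum f a) (y : H) :
    HasSum (fun k => ⟪y, f k⟫_𝕜) ⟪y, a⟫_𝕜 :=
  hf.mapL (innerSL 𝕜 y)

theorem hasSum_re_inner_left {f : J → H} {a : H} (hf : HasSum f a) (y : H) :
    HasSum (fun k => re ⟪f k, y⟫_𝕜) (re ⟪a, y⟫_𝕜) :=
  (hasSum_inner_left hf y).mapL RCLike.reCLM

section PointwiseSum

variable {A : J → H →L[𝕜] H}

theorem isPositive_of_hasSum (hA : ∀ k, (A k).IsPositive)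
    (hS : ∀ x, HasSum (fun k => A k x) (S x)) : S.IsPositive := by
  refine ⟨fun x y => (hasSum_inner_left (hS x) y).unique ?_, fun x => ?_⟩
  · simp only [(hA _).inner_left_eq_inner_right x y]
    exact hasSum_inner_right (hS y) x
  · exact (hasSum_re_inner_left (hS x) x).nonneg fun k => (hA k).re_inner_nonneg_left x

theorem ker_eq_iInf_ker_of_hasSum (hA : ∀ k, (A k).IsPositive)
    (hS : ∀ x, HasSum (fun k => A k x) (S x)) : S.ker = ⨅ k, (A k).ker := by
  ext x
  calc S x = 0 ↔ re ⟪S x, x⟫_𝕜 = 0 :=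
        (re_inner_apply_self_eq_zero_iff (isPositive_of_hasSum hA hS)).symm
    _ ↔ ∀ k, re ⟪A k x, x⟫_𝕜 = 0 := by
        have sum := hasSum_re_inner_left (𝕜 := 𝕜) (hS x) x
        have zero_iff := hasSum_zero_iff_of_nonneg (L := .unconditional J)
          fun k => (hA k).re_inner_nonneg_left x
        exact ⟨fun h => congrFun (zero_iff.mp (h ▸ sum)),
          fun h => sum.unique (zero_iff.mpr (funext h))⟩
    _ ↔ ∀ k, A k x = 0 := forall_congr' fun k => re_inner_apply_self_eq_zero_iff (hA k)
    _ ↔ x ∈ ⨅ k, (A k).ker := by simp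

end PointwiseSum

section OrthogonalProjection

variable {V : Submodule 𝕜 H} {Q : H →L[𝕜] H}

theorem exists_eq_starProjection_orthogonal (hQ : ∀ x, Q x ∈ Vᗮ ∧ x - Q x ∈ V) :
    ∃ _ : V.HasOrthogonalProjection, Q = Vᗮ.starProjection := by
  have : V.HasOrthogonalProjection := ⟨fun x => ⟨x - Q x, (hQ x).2, by simpa using (hQ x).1⟩⟩
  refine ⟨this, ContinuousLinearMap.ext fun x => Eq.symm ?_⟩
  exact Vᗮ.eq_starProjection_of_mem_orthogonal (hQ x).1 (V.le_orthogonal_orthogonal (hQ x).2)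

theorem isPositive_of_mem_orthogonal_of_sub_mem (hQ : ∀ x, Q x ∈ Vᗮ ∧ x - Q x ∈ V) :
    Q.IsPositive := by
  obtain ⟨_, rfl⟩ := exists_eq_starProjection_orthogonal hQ
  exact (Submodule.isSymmetricProjection_starProjection Vᗮ).isPositive

theorem ker_eq_of_mem_orthogonal_of_sub_mem (hQ : ∀ x, Q x ∈ Vᗮ ∧ x - Q x ∈ V) :
    Q.ker = V := by
  obtain ⟨_, rfl⟩ := exists_eq_starProjection_orthogonal hQ
  rw [Submodule.ker_starProjection, Submodule.orthogonal_orthogonal]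

end OrthogonalProjection

end InnerProductSpace

theorem tendsto_pow_one_sub_apply_starProjection_ker {𝕜 H : Type*} [RCLike 𝕜]
    [NormedAddCommGroup H] [InnerProductSpace 𝕜 H] [CompleteSpace H] {S : H →L[𝕜] H}
    (hS : S.IsPositive) (hS_norm : ‖S‖ < 2) (x : H) :
    Tendsto (fun n : ℕ => ((1 - S) ^ n) x) atTop (𝓝 (S.ker.starProjection x)) := by
  have fixed {y : H} (hy : S y = 0) (n : ℕ) : ((1 - S) ^ n) y = y := by
    rw [pow_apply_eq_iterate]
    exact Function.iterate_fixed (by simp [hy]) n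
  have range_subset :
      Set.range S ⊆ {y | Tendsto (fun n : ℕ => ((1 - S) ^ n) y) atTop (𝓝 0)} := by
    rintro _ ⟨y, rfl⟩
    have commute (n : ℕ) : Commute ((1 - S) ^ n) S :=
      ((Commute.one_left S).sub_left (Commute.refl S)).pow_left n
    simpa only [Set.mem_ofPred_eq, ← mul_apply_eq_comp, (commute _).eq]
      using tendsto_apply_pow_one_sub_apply_zero hS hS_norm y
  have mem_closure : x - S.ker.starProjection x ∈ closure (Set.range S) := by
    have h := S.ker.sub_starProjection_mem_orthogonal x
    rwa [S.orthogonal_ker, hS.isSelfAdjoint.adjoint_eq] at h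
  have tendsto_zero := closure_minimal range_subset
    (isClosed_setOfPred_tendsto_pow_apply (norm_one_sub_le_one hS hS_norm.le) 0) mem_closure
  have projection_mem : S (S.ker.starProjection x) = 0 := S.ker.starProjection_apply_mem x
  simpa only [map_sub, fixed projection_mem, sub_add_cancel, zero_add] using
    Tendsto.add_const (S.ker.starProjection x) tendsto_zero

theorem modified_method_of_reflections_pointwise_general
    {𝕜 H J : Type*} [RCLike 𝕜] [NormedAddCommGroup H] [InnerProductSpace 𝕜 H] [CompleteSpace H]
    (V : J → Submodule 𝕜 H)
    (Q : J → H →L[𝕜] H)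
    (hQ : ∀ k (x : H), Q k x ∈ (V k)ᗮ ∧ x - Q k x ∈ V k)
    (P : H →L[𝕜] H)
    (hP : ∀ x : H, P x ∈ (⨅ k, V k) ∧ x - P x ∈ (⨅ k, V k)ᗮ)
    (γ : J → ℝ) (hγ : ∀ k, 0 < γ k)
    (S : H →L[𝕜] H)
    (hS : ∀ x : H, HasSum (fun k => (γ k : 𝕜) • Q k x) (S x))
    (hSnorm : ‖S‖ < 2) (x : H) :
    Tendsto (fun M : ℕ => ((1 - S) ^ M) x) atTop (𝓝 (P x)) := by
  have weighted_pos (k : J) : ((γ k : 𝕜) • Q k).IsPositive :=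
    (isPositive_of_mem_orthogonal_of_sub_mem (hQ k)).smul_of_nonneg
      (RCLike.ofReal_nonneg.mpr (hγ k).le)
  have weighted_ker (k : J) : ((γ k : 𝕜) • Q k).ker = V k :=
    (LinearMap.ker_smul _ _ (RCLike.ofReal_ne_zero.mpr (hγ k).ne')).trans
      (ker_eq_of_mem_orthogonal_of_sub_mem (hQ k))
  have ker_eq : S.ker = ⨅ k, V k :=
    (ker_eq_iInf_ker_of_hasSum weighted_pos hS).trans (iInf_congr weighted_ker)
  have projection_eq : S.ker.starProjection x = P x :=
    S.ker.eq_starProjection_of_mem_orthogonal (ker_eq ▸ (hP x).1) (ker_eq ▸ (hP x).2)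
  exact projection_eq ▸
    tendsto_pow_one_sub_apply_starProjection_ker (isPositive_of_hasSum weighted_pos hS) hSnorm x

/-- **Modified method of reflections with position-dependent weights, convergence.**
With `Q k` the orthogonal projection onto `(V k)ᗮ`, `P` the orthogonal projection onto
`V := ⨅ k, V k`, positive weights `γ k`, and `S x = ∑ k, γ k • Q k x` bounded with
`‖S‖ < 2`, the iterates `(I - S)^M x` converge to `P x` for every `x`. -/
theorem modified_method_of_reflections_pointwise
    {H : Type*} [NormedAddCommGroup H] [InnerProductSpace ℝ H] [CompleteSpace H]
    {J : Type*} [Countable J] (V : J → Submodule ℝ H)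
    (hVclosed : ∀ k, IsClosed ((V k : Set H)))
    (Q : J → H →L[ℝ] H)
    (hQ : ∀ k (x : H), Q k x ∈ (V k)ᗮ ∧ x - Q k x ∈ V k)
    (P : H →L[ℝ] H)
    (hP : ∀ x : H, P x ∈ (⨅ k, V k) ∧ x - P x ∈ (⨅ k, V k)ᗮ)
    (γ : J → ℝ) (hγ : ∀ k, 0 < γ k)
    (S : H →L[ℝ] H)
    (hS : ∀ x : H, HasSum (fun k => γ k • Q k x) (S x))
    (hSnorm : ‖S‖ < 2) (x : H) :
    Tendsto (fun M : ℕ => ((1 - S) ^ M) x) atTop (nhds (P x)) :=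
  modified_method_of_reflections_pointwise_general V Q hQ P hP γ hγ S hS hSnorm x
end

section
/- For integers 1 ≤ n ≤ M and γ ∈ ℝ define q(n,M,γ) := (M! / ((M−n)! (n−1)!)) · ∫_0^γ t^{n−1} (1−t)^{M−n} dt. Then for every fixed integer n ≥ 1 and every real γ with 0 < γ < 2, one has q(n,M,γ) → 1 as M → ∞. -/
open Filter

/-!
Up to its prefactor, the integrand is the Bernstein polynomial of degree `M - 1` and index `n - 1`.
The derivatives of the Bernstein polynomials of degree `M` telescope, so the integral can be
evaluated: `q(n, M, γ) = 1 - ∑_{j < n} (M choose j) γ ^ j (1 - γ) ^ (M - j)`. For `|1 - γ| < 1` each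
of these finitely many terms is a polynomial in `M` times an exponentially small factor.
-/

open Polynomial

section CommRing

variable (R : Type*) [CommRing R]

lemma derivative_sum_range_bernsteinPolynomial (N k : ℕ) :
    derivative (∑ j ∈ Finset.range (k + 1), bernsteinPolynomial R N j) =
      -N * bernsteinPolynomial R (N - 1) k := by
  induction k with
  | zero => rw [zero_add, Finset.sum_range_one, bernsteinPolynomial.derivative_zero]
  | succ k ih =>
    rw [Finset.sum_range_succ, derivative_add, ih, bernsteinPolynomial.derivative_succ]
    ring

lemma eval_zero_sum_range_bernsteinPolynomial (N k : ℕ) :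
    (∑ j ∈ Finset.range (k + 1), bernsteinPolynomial R N j).eval 0 = 1 := by
  simp [eval_finsetSum, bernsteinPolynomial.eval_at_0]

end CommRing

lemma integral_eval_derivative (p : ℝ[X]) (a b : ℝ) :
    ∫ t in a..b, (derivative p).eval t = p.eval b - p.eval a :=
  intervalIntegral.integral_eq_sub_of_hasDerivAt (fun t _ => p.hasDerivAt t)
    ((derivative p).continuous.intervalIntegrable a b)

lemma mul_integral_eval_bernsteinPolynomial (N k : ℕ) (x : ℝ) :
    N * ∫ t in (0 : ℝ)..x, (bernsteinPolynomial ℝ (N - 1) k).eval t =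
      1 - ∑ j ∈ Finset.range (k + 1), (bernsteinPolynomial ℝ N j).eval x := by
  have ftc := integral_eval_derivative
    (∑ j ∈ Finset.range (k + 1), bernsteinPolynomial ℝ N j) 0 x
  rw [derivative_sum_range_bernsteinPolynomial, eval_zero_sum_range_bernsteinPolynomial,
    eval_finsetSum] at ftc
  simp only [eval_mul, eval_neg, eval_natCast, intervalIntegral.integral_const_mul] at ftc
  linarith

lemma factorial_succ_div_factorial_mul_factorial (K : Type*) [DivisionRing K] [CharZero K]
    {N k : ℕ} (hk : k ≤ N) :
    ((N + 1).factorial : K) / ((N - k).factorial * k.factorial) = (N + 1 : ℕ) * N.choose k := by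
  rw [Nat.cast_choose K hk, Nat.factorial_succ, Nat.cast_mul, mul_div_assoc,
    (Nat.cast_commute (N - k).factorial (k.factorial : K)).eq]

lemma factorial_div_mul_integral_eq_one_sub_sum {N k : ℕ} (hk : k ≤ N) (x : ℝ) :
    ((N + 1).factorial : ℝ) / ((N - k).factorial * k.factorial) *
        ∫ t in (0 : ℝ)..x, t ^ k * (1 - t) ^ (N - k) =
      1 - ∑ j ∈ Finset.range (k + 1), (bernsteinPolynomial ℝ (N + 1) j).eval x := by
  rw [← mul_integral_eval_bernsteinPolynomial, factorial_succ_div_factorial_mul_factorial ℝ hk,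
    mul_assoc, ← intervalIntegral.integral_const_mul]
  simp [bernsteinPolynomial, mul_assoc]

lemma tendsto_eval_bernsteinPolynomial_atTop_nhds_zero {R : Type*} [NormedCommRing R]
    [HasSummableGeomSeries R] {x : R} (hx : ‖1 - x‖ < 1) (j : ℕ) :
    Tendsto (fun N : ℕ => (bernsteinPolynomial R N j).eval x) atTop (nhds 0) := by
  rw [← tendsto_add_atTop_iff_nat j]
  have choose_mul_pow_tendsto :=
    (summable_choose_mul_geometric_of_norm_lt_one j hx).tendsto_atTop_zero
  have scaled_tendsto := choose_mul_pow_tendsto.const_mul (x ^ j)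
  rw [mul_zero] at scaled_tendsto
  refine scaled_tendsto.congr fun m => ?_
  simp only [bernsteinPolynomial, eval_mul, eval_natCast, eval_pow, eval_X, eval_sub, eval_one,
    Nat.add_sub_cancel]
  ring

/-- **The resummation coefficients tend to `1`.**
For fixed `n ≥ 1` and `0 < γ < 2`, the coefficients
`q(n,M,γ) := M!/((M−n)!(n−1)!) ∫_0^γ t^{n−1}(1−t)^{M−n} dt` satisfy `q(n,M,γ) → 1`
as `M → ∞`. -/
theorem resummation_coefficient_tendsto_one
    (n : ℕ) (hn : 1 ≤ n) (γ : ℝ) (hγ0 : 0 < γ) (hγ2 : γ < 2) :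
    Tendsto
      (fun M : ℕ =>
        (M.factorial : ℝ) / ((M - n).factorial * (n - 1).factorial) *
          ∫ t in (0 : ℝ)..γ, t ^ (n - 1) * (1 - t) ^ (M - n))
      atTop (nhds 1) := by
  obtain ⟨k, rfl⟩ := Nat.exists_eq_add_of_le' hn
  have norm_one_sub_lt : ‖1 - γ‖ < 1 := abs_lt.mpr ⟨by linarith, by linarith⟩
  have sum_tendsto : Tendsto
      (fun M => ∑ j ∈ Finset.range (k + 1), (bernsteinPolynomial ℝ M j).eval γ) atTop (nhds 0) := by
    simpa only [Finset.sum_const_zero] using tendsto_finsetSum (Finset.range (k + 1))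
      fun j _ => tendsto_eval_bernsteinPolynomial_atTop_nhds_zero norm_one_sub_lt j
  have one_sub_sum_tendsto := sum_tendsto.const_sub 1
  rw [sub_zero] at one_sub_sum_tendsto
  refine one_sub_sum_tendsto.congr' ?_
  filter_upwards [eventually_ge_atTop (k + 1)] with M hM
  obtain ⟨N, rfl⟩ := Nat.exists_eq_add_of_le' (hn.trans hM)
  rw [Nat.add_sub_add_right, Nat.add_sub_cancel,
    factorial_div_mul_integral_eq_one_sub_sum (Nat.le_of_succ_le_succ hM)]
end

section
/- Let z ∈ ℝ³ and 0 < ρ < R. Let u : ℝ³ → ℝ be continuously differentiable on the open ball B_R(z) and suppose u = 0 on B_ρ(z). Then ∫_{B_R(z)} |u(y)|² dy ≤ (R³/ρ) ∫_{B_R(z)} |∇u(y)|² dy. -/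
open MeasureTheory
open scoped ENNReal

/-!
Along each ray `r ↦ z + r e`, `‖e‖ = 1`, the function `u` vanishes at `r = ρ`, so
`|u(z + r e)| ≤ ∫_ρ^R |∇u(z + s e)| ds`. Cauchy–Schwarz with the weight `s²`, the density of the
volume in polar coordinates, bounds the square of the right-hand side by
`(∫_ρ^R s⁻² ds) (∫_ρ^R s² |∇u(z + s e)|² ds)`, where the first factor is at most `1 / ρ`.
Multiplying by `r²` and integrating over `r ∈ (ρ, R)` costs a factor `R³`; integrating over `e` in
the unit sphere gives the claim. In dimension `d ≥ 3` the weight is `s^(d - 1)`. The fundamental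
theorem of calculus needs `∇u` to be integrable along the ray; where it is not, the bound is
infinite.
-/

open Metric Set Module

section WeightedCauchySchwarz

variable {α : Type*} [MeasurableSpace α] {μ : Measure α}

lemma rpow_half_sq (a : ℝ≥0∞) : (a ^ (1 / 2 : ℝ)) ^ 2 = a := by
  simpa using ENNReal.rpow_inv_natCast_pow two_ne_zero a

lemma sq_lintegral_mul_le {f g : α → ℝ≥0∞} (hf : AEMeasurable f μ) (hg : AEMeasurable g μ) :
    (∫⁻ x, f x * g x ∂μ) ^ 2 ≤ (∫⁻ x, f x ^ 2 ∂μ) * ∫⁻ x, g x ^ 2 ∂μ := by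
  have holder := ENNReal.lintegral_mul_le_Lp_mul_Lq μ .two_two hf hg
  simpa only [ENNReal.rpow_two, mul_pow, rpow_half_sq, Pi.mul_apply] using pow_le_pow_left' holder 2

lemma sq_lintegral_le_lintegral_inv_mul {w f : α → ℝ≥0∞} (hw : AEMeasurable w μ)
    (hf : AEMeasurable f μ) (hw_ne_zero : ∀ᵐ x ∂μ, w x ≠ 0) (hw_ne_top : ∀ᵐ x ∂μ, w x ≠ ∞) :
    (∫⁻ x, f x ∂μ) ^ 2 ≤ (∫⁻ x, (w x)⁻¹ ∂μ) * ∫⁻ x, w x * f x ^ 2 ∂μ := by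
  calc (∫⁻ x, f x ∂μ) ^ 2
    _ = (∫⁻ x, (w x)⁻¹ ^ (1 / 2 : ℝ) * (w x ^ (1 / 2 : ℝ) * f x) ∂μ) ^ 2 := by
      congr 1
      refine lintegral_congr_ae ?_
      filter_upwards [hw_ne_zero, hw_ne_top] with x hx_zero hx_top
      rw [← mul_assoc, ← ENNReal.mul_rpow_of_nonneg _ _ (by norm_num),
        ENNReal.inv_mul_cancel hx_zero hx_top, ENNReal.one_rpow, one_mul]
    _ ≤ (∫⁻ x, ((w x)⁻¹ ^ (1 / 2 : ℝ)) ^ 2 ∂μ) * ∫⁻ x, (w x ^ (1 / 2 : ℝ) * f x) ^ 2 ∂μ :=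
      sq_lintegral_mul_le (by fun_prop) (by fun_prop)
    _ = (∫⁻ x, (w x)⁻¹ ∂μ) * ∫⁻ x, w x * f x ^ 2 ∂μ := by
      simp only [mul_pow, rpow_half_sq]

end WeightedCauchySchwarz

section Interval

variable {F : Type*} [NormedAddCommGroup F] [NormedSpace ℝ F] [CompleteSpace F]
  {f : ℝ → F} {a b : ℝ}

lemma enorm_sub_le_lintegral_enorm_deriv (hab : a ≤ b) (hf : ContinuousOn f (Icc a b))
    (hf' : DifferentiableOn ℝ f (Ioo a b)) :
    ‖f b - f a‖ₑ ≤ ∫⁻ x in Ioo a b, ‖deriv f x‖ₑ := by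
  rcases eq_top_or_lt_top (∫⁻ x in Ioo a b, ‖deriv f x‖ₑ) with h_top | h_lt_top
  · exact h_top ▸ le_top
  have integrable_deriv : IntegrableOn (deriv f) (Ioo a b) :=
    ⟨(stronglyMeasurable_deriv f).aestronglyMeasurable, h_lt_top⟩
  have ftc : ∫ x in Ioo a b, deriv f x = f b - f a := by
    rw [← integral_Ioc_eq_integral_Ioo, ← intervalIntegral.integral_of_le hab]
    refine intervalIntegral.integral_eq_sub_of_hasDerivAt_of_le hab hf (fun x hx ↦ ?_) ?_
    · exact (hf'.differentiableAt (isOpen_Ioo.mem_nhds hx)).hasDerivAt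
    · rwa [intervalIntegrable_iff_integrableOn_Ioo_of_le hab]
  rw [← ftc]
  exact enorm_integral_le_lintegral_enorm _

lemma lintegral_mul_enorm_sq_le_of_eq_zero_left {w : ℝ → ℝ≥0∞}
    (hw : AEMeasurable w (volume.restrict (Ioo a b)))
    (hw_ne_zero : ∀ x ∈ Ioo a b, w x ≠ 0) (hw_ne_top : ∀ x ∈ Ioo a b, w x ≠ ∞)
    (hf : ContinuousOn f (Ico a b)) (hf' : DifferentiableOn ℝ f (Ioo a b)) (hfa : f a = 0) :
    ∫⁻ x in Ioo a b, w x * ‖f x‖ₑ ^ 2 ≤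
      (∫⁻ x in Ioo a b, w x) * (∫⁻ x in Ioo a b, (w x)⁻¹) *
        ∫⁻ x in Ioo a b, w x * ‖deriv f x‖ₑ ^ 2 := by
  have enorm_le (x) (hx : x ∈ Ioo a b) : ‖f x‖ₑ ≤ ∫⁻ y in Ioo a b, ‖deriv f y‖ₑ := calc
    ‖f x‖ₑ = ‖f x - f a‖ₑ := by rw [hfa, sub_zero]
    _ ≤ ∫⁻ y in Ioo a x, ‖deriv f y‖ₑ :=
      enorm_sub_le_lintegral_enorm_deriv hx.1.le (hf.mono (Icc_subset_Ico_right hx.2))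
        (hf'.mono (Ioo_subset_Ioo_right hx.2.le))
    _ ≤ ∫⁻ y in Ioo a b, ‖deriv f y‖ₑ := lintegral_mono_set (Ioo_subset_Ioo_right hx.2.le)
  calc ∫⁻ x in Ioo a b, w x * ‖f x‖ₑ ^ 2
    _ ≤ ∫⁻ x in Ioo a b, w x * (∫⁻ y in Ioo a b, ‖deriv f y‖ₑ) ^ 2 :=
      setLIntegral_mono' measurableSet_Ioo fun x hx ↦ by gcongr; exact enorm_le x hx
    _ = (∫⁻ x in Ioo a b, w x) * (∫⁻ y in Ioo a b, ‖deriv f y‖ₑ) ^ 2 :=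
      lintegral_mul_const'' _ hw
    _ ≤ (∫⁻ x in Ioo a b, w x) * ((∫⁻ x in Ioo a b, (w x)⁻¹) *
          ∫⁻ x in Ioo a b, w x * ‖deriv f x‖ₑ ^ 2) := by
      gcongr
      exact sq_lintegral_le_lintegral_inv_mul hw
        (stronglyMeasurable_deriv f).enorm.aemeasurable
        (ae_restrict_of_forall_mem measurableSet_Ioo hw_ne_zero)
        (ae_restrict_of_forall_mem measurableSet_Ioo hw_ne_top)
    _ = _ := (mul_assoc _ _ _).symm

end Interval

section PowerWeight

variable {ρ R : ℝ}

lemma lintegral_Ioo_pow_le (n : ℕ) (hρ : 0 ≤ ρ) (hR : 0 ≤ R) :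
    ∫⁻ r in Ioo ρ R, ENNReal.ofReal (r ^ n) ≤ ENNReal.ofReal (R ^ (n + 1)) :=
  calc ∫⁻ r in Ioo ρ R, ENNReal.ofReal (r ^ n)
    _ ≤ ∫⁻ _ in Ioo ρ R, ENNReal.ofReal (R ^ n) :=
      setLIntegral_mono' measurableSet_Ioo fun r hr ↦ ENNReal.ofReal_le_ofReal
        (pow_le_pow_left₀ (hρ.trans hr.1.le) hr.2.le n)
    _ = ENNReal.ofReal (R ^ n * (R - ρ)) := by
      rw [setLIntegral_const, Real.volume_Ioo, ENNReal.ofReal_mul (by positivity)]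
    _ ≤ ENNReal.ofReal (R ^ (n + 1)) := by
      rw [pow_succ]
      gcongr
      linarith

lemma lintegral_Ioi_inv_pow (n : ℕ) (hρ : 0 < ρ) :
    ∫⁻ s in Ioi ρ, (ENNReal.ofReal (s ^ (n + 2)))⁻¹ =
      ENNReal.ofReal (((n + 1) * ρ ^ (n + 1))⁻¹) := by
  have exponent_lt : -(n + 2 : ℝ) < -1 := by linarith [n.cast_nonneg (α := ℝ)]
  calc ∫⁻ s in Ioi ρ, (ENNReal.ofReal (s ^ (n + 2)))⁻¹
    _ = ∫⁻ s in Ioi ρ, ENNReal.ofReal (s ^ (-(n + 2 : ℝ))) := by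
      refine setLIntegral_congr_fun measurableSet_Ioi fun s hs ↦ ?_
      have s_pos : 0 < s := hρ.trans hs
      rw [← ENNReal.ofReal_inv_of_pos (by positivity), Real.rpow_neg s_pos.le]
      norm_cast
    _ = ENNReal.ofReal (∫ s in Ioi ρ, s ^ (-(n + 2 : ℝ))) :=
      (ofReal_integral_eq_lintegral_ofReal (integrableOn_Ioi_rpow_of_lt exponent_lt hρ)
        (ae_restrict_of_forall_mem measurableSet_Ioi fun s hs ↦
          Real.rpow_nonneg (hρ.trans hs).le _)).symm
    _ = ENNReal.ofReal (((n + 1) * ρ ^ (n + 1))⁻¹) := by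
      have exponent_add_one : -(n + 2 : ℝ) + 1 = -((n + 1 : ℕ) : ℝ) := by push_cast; ring
      rw [integral_Ioi_rpow_of_lt exponent_lt hρ, exponent_add_one, Real.rpow_neg hρ.le,
        Real.rpow_natCast, neg_div_neg_eq, mul_inv_rev, div_eq_mul_inv]
      push_cast
      rfl

lemma lintegral_Ioo_pow_mul_lintegral_Ioo_inv_pow_le (n : ℕ) (hρ : 0 < ρ) (hR : 0 ≤ R) :
    (∫⁻ r in Ioo ρ R, ENNReal.ofReal (r ^ (n + 2))) *
        ∫⁻ r in Ioo ρ R, (ENNReal.ofReal (r ^ (n + 2)))⁻¹ ≤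
      ENNReal.ofReal (R ^ (n + 3) / ((n + 1) * ρ ^ (n + 1))) :=
  calc (∫⁻ r in Ioo ρ R, ENNReal.ofReal (r ^ (n + 2))) *
        ∫⁻ r in Ioo ρ R, (ENNReal.ofReal (r ^ (n + 2)))⁻¹
    _ ≤ ENNReal.ofReal (R ^ (n + 3)) * ENNReal.ofReal (((n + 1) * ρ ^ (n + 1))⁻¹) := by
      gcongr
      · exact lintegral_Ioo_pow_le (n + 2) hρ.le hR
      · exact (lintegral_mono_set Ioo_subset_Ioi_self).trans_eq (lintegral_Ioi_inv_pow n hρ)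
    _ = ENNReal.ofReal (R ^ (n + 3) / ((n + 1) * ρ ^ (n + 1))) := by
      rw [← ENNReal.ofReal_mul (by positivity), ← div_eq_mul_inv]

end PowerWeight

section Rays

variable {E : Type*} [SeminormedAddCommGroup E] [NormedSpace ℝ E] {z e : E}

lemma add_smul_mem_ball_iff (he : ‖e‖ = 1) {r R : ℝ} (hr : 0 ≤ r) :
    z + r • e ∈ ball z R ↔ r < R := by
  rw [mem_ball_iff_norm, add_sub_cancel_left, norm_smul, he, mul_one, Real.norm_of_nonneg hr]

lemma eqOn_closedBall_of_eqOn_ball {Y : Type*} [TopologicalSpace Y] [T2Space Y] {f g : E → Y}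
    {ρ : ℝ} (hρ : ρ ≠ 0) (hf : ContinuousOn f (closedBall z ρ))
    (hg : ContinuousOn g (closedBall z ρ)) (hfg : EqOn f g (ball z ρ)) :
    EqOn f g (closedBall z ρ) :=
  hfg.of_subset_closure hf hg ball_subset_closedBall (closure_ball z hρ).ge

end Rays

section Polar

variable {E : Type*} [NormedAddCommGroup E] [NormedSpace ℝ E] [FiniteDimensional ℝ E]
  [Nontrivial E] [MeasurableSpace E] [BorelSpace E] (μ : Measure E) [μ.IsAddHaarMeasure]

lemma lintegral_eq_lintegral_toSphere {g : E → ℝ≥0∞} (hg : AEMeasurable g μ) :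
    ∫⁻ y, g y ∂μ = ∫⁻ e : sphere (0 : E) 1, ∫⁻ r in Ioi (0 : ℝ),
      ENNReal.ofReal (r ^ (finrank ℝ E - 1)) * g (r • (e : E)) ∂volume ∂μ.toSphere := by
  let polar := (homeomorphUnitSphereProd E).toMeasurableEquiv
  have polar_symm_preserving : MeasurePreserving polar.symm
      (μ.toSphere.prod (.volumeIoiPow (finrank ℝ E - 1))) (μ.comap (↑)) :=
    μ.measurePreserving_homeomorphUnitSphereProd.symm polar
  have hg_compl : AEMeasurable (fun y : ({0}ᶜ : Set E) ↦ g y) (μ.comap (↑)) :=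
    (aemeasurable_restrict_iff_comap_subtype (measurableSet_singleton _).compl).1 hg.restrict
  calc ∫⁻ y, g y ∂μ
    _ = ∫⁻ y : ({0}ᶜ : Set E), g y ∂μ.comap (↑) := by
      rw [lintegral_subtype_comap (measurableSet_singleton _).compl, restrict_compl_singleton]
    _ = ∫⁻ p, g (polar.symm p) ∂μ.toSphere.prod (.volumeIoiPow (finrank ℝ E - 1)) :=
      (polar_symm_preserving.lintegral_comp_emb polar.symm.measurableEmbedding (g ·)).symm
    _ = ∫⁻ e, ∫⁻ r : Ioi (0 : ℝ), g (r.1 • (e : E)) ∂.volumeIoiPow (finrank ℝ E - 1)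
          ∂μ.toSphere :=
      lintegral_prod _ (hg_compl.comp_quasiMeasurePreserving
        polar_symm_preserving.quasiMeasurePreserving)
    _ = _ := by
      refine lintegral_congr fun e ↦ ?_
      rw [Measure.volumeIoiPow, lintegral_withDensity_eq_lintegral_mul_non_measurable _
        (by fun_prop) (.of_forall fun _ ↦ ENNReal.ofReal_lt_top)]
      exact lintegral_subtype_comap measurableSet_Ioi
        fun r : ℝ ↦ ENNReal.ofReal (r ^ (finrank ℝ E - 1)) * g (r • (e : E))

lemma setLIntegral_ball_eq_lintegral_toSphere {g : E → ℝ≥0∞} {z : E} {R : ℝ}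
    (hg : AEMeasurable g (μ.restrict (ball z R))) :
    ∫⁻ y in ball z R, g y ∂μ = ∫⁻ e : sphere (0 : E) 1, ∫⁻ r in Ioo 0 R,
      ENNReal.ofReal (r ^ (finrank ℝ E - 1)) * g (z + r • (e : E)) ∂volume ∂μ.toSphere := by
  have hg_indicator : AEMeasurable (fun y ↦ (ball z R).indicator g (z + y)) μ :=
    ((aemeasurable_indicator_iff measurableSet_ball).2 hg).comp_quasiMeasurePreserving
      (measurePreserving_add_left μ z).quasiMeasurePreserving
  rw [← lintegral_indicator measurableSet_ball, ← lintegral_add_left_eq_self _ z,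
    lintegral_eq_lintegral_toSphere μ hg_indicator]
  refine lintegral_congr fun e ↦ ?_
  rw [← Ioi_inter_Iio, inter_comm, ← setLIntegral_indicator measurableSet_Iio]
  refine setLIntegral_congr_fun measurableSet_Ioi fun r hr ↦ ?_
  have mem_ball_iff := add_smul_mem_ball_iff (z := z) (norm_eq_of_mem_sphere e) hr.le (R := R)
  by_cases hrR : r < R
  · simp only [indicator_of_mem (mem_ball_iff.2 hrR), indicator_of_mem (mem_Iio.2 hrR)]
  · simp only [indicator_of_notMem (mem_ball_iff.not.2 hrR), mul_zero,
      indicator_of_notMem (notMem_Iio.2 (not_lt.1 hrR))]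

lemma setLIntegral_ball_le_mul_of_forall_ray_le {g h : E → ℝ≥0∞} {z : E} {R : ℝ} {C : ℝ≥0∞}
    (hC : C ≠ ∞) (hg : AEMeasurable g (μ.restrict (ball z R)))
    (hh : AEMeasurable h (μ.restrict (ball z R)))
    (ray_le : ∀ e : E, ‖e‖ = 1 →
      ∫⁻ r in Ioo 0 R, ENNReal.ofReal (r ^ (finrank ℝ E - 1)) * g (z + r • e) ≤
        C * ∫⁻ r in Ioo 0 R, ENNReal.ofReal (r ^ (finrank ℝ E - 1)) * h (z + r • e)) :
    ∫⁻ y in ball z R, g y ∂μ ≤ C * ∫⁻ y in ball z R, h y ∂μ := by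
  rw [setLIntegral_ball_eq_lintegral_toSphere μ hg, setLIntegral_ball_eq_lintegral_toSphere μ hh,
    ← lintegral_const_mul' _ _ hC]
  exact lintegral_mono fun e ↦ ray_le e (norm_eq_of_mem_sphere e)

end Polar

lemma enorm_gradient {𝕜 E : Type*} [RCLike 𝕜] [NormedAddCommGroup E] [InnerProductSpace 𝕜 E]
    [CompleteSpace E] (f : E → 𝕜) (x : E) : ‖gradient f x‖ₑ = ‖fderiv 𝕜 f x‖ₑ :=
  (InnerProductSpace.toDual 𝕜 E).symm.enorm_map _

section Ball

variable {E F : Type*} [NormedAddCommGroup E] [NormedSpace ℝ E]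
  [NormedAddCommGroup F] [NormedSpace ℝ F] {u : E → F} {z e : E} {ρ R : ℝ}

lemma enorm_deriv_comp_add_smul_le {r : ℝ} (hu : DifferentiableAt ℝ u (z + r • e)) :
    ‖deriv (fun s : ℝ ↦ u (z + s • e)) r‖ₑ ≤ ‖fderiv ℝ u (z + r • e)‖ₑ * ‖e‖ₑ := by
  have hasDerivAt_ray : HasDerivAt (fun s : ℝ ↦ z + s • e) e r := by
    simpa using ((hasDerivAt_id r).smul_const e).const_add z
  have deriv_ray : deriv (fun s : ℝ ↦ u (z + s • e)) r = fderiv ℝ u (z + r • e) e :=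
    (hu.hasFDerivAt.comp_hasDerivAt r hasDerivAt_ray).deriv
  rw [deriv_ray]
  exact (fderiv ℝ u (z + r • e)).le_opENorm e

variable [CompleteSpace F]

lemma lintegral_ray_mul_enorm_sq_le_of_eq_zero_on_ball {w : ℝ → ℝ≥0∞}
    (hw : AEMeasurable w (volume.restrict (Ioo ρ R)))
    (hw_ne_zero : ∀ r ∈ Ioo ρ R, w r ≠ 0) (hw_ne_top : ∀ r ∈ Ioo ρ R, w r ≠ ∞)
    (he : ‖e‖ = 1) (hρ : 0 < ρ) (hρR : ρ < R) (hu : DifferentiableOn ℝ u (ball z R))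
    (hu0 : ∀ y ∈ ball z ρ, u y = 0) :
    ∫⁻ r in Ioo 0 R, w r * ‖u (z + r • e)‖ₑ ^ 2 ≤
      (∫⁻ r in Ioo ρ R, w r) * (∫⁻ r in Ioo ρ R, (w r)⁻¹) *
        ∫⁻ r in Ioo 0 R, w r * ‖fderiv ℝ u (z + r • e)‖ₑ ^ 2 := by
  have enorm_e : ‖e‖ₑ = 1 := by rw [← ofReal_norm, he, ENNReal.ofReal_one]
  have ray_mem_ball {r : ℝ} (hr : r ∈ Ico ρ R) : z + r • e ∈ ball z R :=
    (add_smul_mem_ball_iff he (hρ.le.trans hr.1)).2 hr.2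
  have eq_zero_of_le {r : ℝ} (hr : r ∈ Icc 0 ρ) : u (z + r • e) = 0 := by
    refine eqOn_closedBall_of_eqOn_ball (g := 0) hρ.ne'
      (hu.continuousOn.mono (closedBall_subset_ball hρR)) continuousOn_const hu0 ?_
    simpa [norm_smul, he, abs_of_nonneg hr.1] using hr.2
  have hu_ray : DifferentiableOn ℝ (fun r : ℝ ↦ u (z + r • e)) (Ico ρ R) :=
    hu.comp (by fun_prop) fun r hr ↦ ray_mem_ball hr
  calc ∫⁻ r in Ioo 0 R, w r * ‖u (z + r • e)‖ₑ ^ 2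
    _ ≤ (∫⁻ r in Ioc 0 ρ, w r * ‖u (z + r • e)‖ₑ ^ 2) +
          ∫⁻ r in Ioo ρ R, w r * ‖u (z + r • e)‖ₑ ^ 2 := by
      rw [← Ioc_union_Ioo_eq_Ioo hρ.le hρR]
      exact lintegral_union_le _ _ _
    _ = ∫⁻ r in Ioo ρ R, w r * ‖u (z + r • e)‖ₑ ^ 2 := by
      rw [setLIntegral_eq_zero measurableSet_Ioc fun r hr ↦ ?_, zero_add]
      simp [eq_zero_of_le (Ioc_subset_Icc_self hr)]
    _ ≤ (∫⁻ r in Ioo ρ R, w r) * (∫⁻ r in Ioo ρ R, (w r)⁻¹) *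
          ∫⁻ r in Ioo ρ R, w r * ‖deriv (fun s ↦ u (z + s • e)) r‖ₑ ^ 2 :=
      lintegral_mul_enorm_sq_le_of_eq_zero_left hw hw_ne_zero hw_ne_top hu_ray.continuousOn
        (hu_ray.mono Ioo_subset_Ico_self) (eq_zero_of_le ⟨hρ.le, le_rfl⟩)
    _ ≤ (∫⁻ r in Ioo ρ R, w r) * (∫⁻ r in Ioo ρ R, (w r)⁻¹) *
          ∫⁻ r in Ioo ρ R, w r * ‖fderiv ℝ u (z + r • e)‖ₑ ^ 2 := by
      gcongr _ * ?_
      refine setLIntegral_mono' measurableSet_Ioo fun r hr ↦ ?_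
      have hu_at : DifferentiableAt ℝ u (z + r • e) :=
        hu.differentiableAt (isOpen_ball.mem_nhds (ray_mem_ball (Ioo_subset_Ico_self hr)))
      gcongr
      simpa [enorm_e] using enorm_deriv_comp_add_smul_le hu_at
    _ ≤ _ := by
      gcongr _ * ?_
      exact lintegral_mono_set (Ioo_subset_Ioo_left hρ.le)

variable [FiniteDimensional ℝ E] [MeasurableSpace E] [BorelSpace E]
  (μ : Measure E) [μ.IsAddHaarMeasure]

theorem poincare_ball_of_zero_on_inner_ball_general (hdim : 3 ≤ finrank ℝ E)
    (hρ : 0 < ρ) (hρR : ρ < R) (hu : DifferentiableOn ℝ u (ball z R))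
    (hu0 : ∀ y ∈ ball z ρ, u y = 0) :
    ∫⁻ y in ball z R, ‖u y‖ₑ ^ 2 ∂μ ≤
      ENNReal.ofReal (R ^ finrank ℝ E / ((finrank ℝ E - 2) * ρ ^ (finrank ℝ E - 2))) *
        ∫⁻ y in ball z R, ‖fderiv ℝ u y‖ₑ ^ 2 ∂μ := by
  obtain ⟨n, hn⟩ := Nat.exists_eq_add_of_le' hdim
  have : Nontrivial E := nontrivial_of_finrank_pos (R := ℝ) (by lia)
  have const_eq : R ^ finrank ℝ E / ((finrank ℝ E - 2) * ρ ^ (finrank ℝ E - 2)) =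
      R ^ (n + 3) / ((n + 1) * ρ ^ (n + 1)) := by
    rw [hn, show n + 3 - 2 = n + 1 by lia]
    push_cast
    ring
  have hu_meas : AEMeasurable (fun y ↦ ‖u y‖ₑ ^ 2) (μ.restrict (ball z R)) :=
    ((ENNReal.continuous_pow 2).comp_continuousOn hu.continuousOn.enorm).aemeasurable
      measurableSet_ball
  have hfderiv_meas : AEMeasurable (fun y ↦ ‖fderiv ℝ u y‖ₑ ^ 2) (μ.restrict (ball z R)) :=
    ((measurable_fderiv ℝ u).enorm.pow_const 2).aemeasurable
  rw [const_eq]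
  refine setLIntegral_ball_le_mul_of_forall_ray_le μ ENNReal.ofReal_ne_top hu_meas hfderiv_meas
    fun e he ↦ ?_
  rw [hn, show n + 3 - 1 = n + 2 by lia]
  refine (lintegral_ray_mul_enorm_sq_le_of_eq_zero_on_ball (by fun_prop) (fun r hr ↦ ?_)
    (fun _ _ ↦ ENNReal.ofReal_ne_top) he hρ hρR hu hu0).trans ?_
  · exact (ENNReal.ofReal_pos.2 (pow_pos (hρ.trans hr.1) _)).ne'
  · gcongr
    exact lintegral_Ioo_pow_mul_lintegral_Ioo_inv_pow_le n hρ (hρ.trans hρR).le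

end Ball

/-- **Local Poincaré inequality for functions vanishing on an inner ball.**
If `u` is `C¹` on the ball `B_R(z) ⊂ ℝ³` and vanishes on `B_ρ(z)` with `0 < ρ < R`, then
`∫_{B_R(z)} u² ≤ (R³/ρ) ∫_{B_R(z)} |∇u|²`. -/
theorem poincare_ball_of_zero_on_inner_ball
    (z : EuclideanSpace ℝ (Fin 3)) (ρ R : ℝ) (hρ : 0 < ρ) (hρR : ρ < R)
    (u : EuclideanSpace ℝ (Fin 3) → ℝ)
    (hu : ContDiffOn ℝ 1 u (Metric.ball z R))
    (hu0 : ∀ y ∈ Metric.ball z ρ, u y = 0) :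
    ∫⁻ y in Metric.ball z R, (‖u y‖₊ : ℝ≥0∞) ^ 2
      ≤ ENNReal.ofReal (R ^ 3 / ρ) *
          ∫⁻ y in Metric.ball z R, (‖gradient u y‖₊ : ℝ≥0∞) ^ 2 := by
  have three_sub_two : (3 - 2 : ℝ) = 1 := by norm_num
  simpa [three_sub_two, ← enorm_eq_nnnorm, enorm_gradient] using
    poincare_ball_of_zero_on_inner_ball_general volume (by simp) hρ hρR
      (hu.differentiableOn one_ne_zero) hu0
end

section
/- There exists a constant C > 0 such that for every z ∈ ℝ³ with z ≠ 0, ∫_{ℝ³} ( e^{−|y|/2} / |y|² ) · ( e^{−|y−z|/2} / |y−z|² ) dy ≤ C · e^{−|z|/4} / |z|². -/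
open MeasureTheory
open scoped ENNReal

/-!
By the triangle inequality the larger of `‖y‖` and `‖y - z‖` is at least `‖z‖ / 2`, so the power
singularity of that factor costs at most a constant times `‖z‖ ^ (-p)`. Spending a part `b < a` of
the exponential rate on `exp (-b * ‖z‖)` leaves the other factor with rate `a - b > 0`. Hence the
product of the two kernels is dominated by a multiple of the kernel at `z` times a sum of two
translates of one kernel, which is integrable because `p` is less than the dimension.
-/

/-- The radial profile of a Yukawa-type kernel with exponential rate `a` and singularity of order
`p`, as a function of the distance `r` to the origin. For `p ≠ 0` its value at `r = 0` is `0`. -/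
noncomputable def yukawaKernel (a p r : ℝ) : ℝ :=
  Real.exp (-a * r) / r ^ p

lemma yukawaKernel_nonneg (a p : ℝ) {r : ℝ} (hr : 0 ≤ r) : 0 ≤ yukawaKernel a p r := by
  unfold yukawaKernel
  positivity

lemma measurable_yukawaKernel (a p : ℝ) : Measurable (yukawaKernel a p) := by
  unfold yukawaKernel
  fun_prop

lemma yukawaKernel_inv_two (c r : ℝ) : yukawaKernel c⁻¹ 2 r = Real.exp (-r / c) / r ^ 2 := by
  rw [yukawaKernel, Real.rpow_two, neg_mul, inv_mul_eq_div, neg_div]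

section Pointwise

variable {a b p r s t : ℝ}

lemma yukawaKernel_mul_le_of_le (hb : 0 ≤ b) (hba : b ≤ a) (hp : 0 ≤ p) (hr : 0 < r) (ht : 0 ≤ t)
    (hts : t ≤ s) (hrst : r ≤ s + t) :
    yukawaKernel a p s * yukawaKernel a p t ≤
      2 ^ p * yukawaKernel b p r * yukawaKernel (a - b) p t := by
  have hs : 0 ≤ s := ht.trans hts
  have exp_le : Real.exp (-a * s) * Real.exp (-a * t) ≤
      Real.exp (-b * r) * Real.exp (-(a - b) * t) := by
    rw [← Real.exp_add, ← Real.exp_add, Real.exp_le_exp]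
    have retained : b * r ≤ b * (s + t) := by gcongr
    have discarded : 0 ≤ (a - b) * s := mul_nonneg (sub_nonneg.2 hba) hs
    linarith
  have inv_pow_le : 1 / s ^ p ≤ 2 ^ p / r ^ p := by
    calc 1 / s ^ p ≤ 1 / (r / 2) ^ p := by gcongr; linarith
      _ = 2 ^ p / r ^ p := by rw [Real.div_rpow hr.le zero_le_two, one_div_div]
  unfold yukawaKernel
  calc Real.exp (-a * s) / s ^ p * (Real.exp (-a * t) / t ^ p)
      = Real.exp (-a * s) * Real.exp (-a * t) * (1 / s ^ p) * (1 / t ^ p) := by ring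
    _ ≤ Real.exp (-b * r) * Real.exp (-(a - b) * t) * (2 ^ p / r ^ p) * (1 / t ^ p) := by gcongr
    _ = 2 ^ p * (Real.exp (-b * r) / r ^ p) * (Real.exp (-(a - b) * t) / t ^ p) := by ring

lemma yukawaKernel_mul_le (hb : 0 ≤ b) (hba : b ≤ a) (hp : 0 ≤ p) (hr : 0 < r) (hs : 0 ≤ s)
    (ht : 0 ≤ t) (hrst : r ≤ s + t) :
    yukawaKernel a p s * yukawaKernel a p t ≤
      2 ^ p * yukawaKernel b p r * (yukawaKernel (a - b) p s + yukawaKernel (a - b) p t) := by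
  have factor_nonneg : 0 ≤ 2 ^ p * yukawaKernel b p r :=
    mul_nonneg (by positivity) (yukawaKernel_nonneg b p hr.le)
  rcases le_total t s with hts | hst
  · refine (yukawaKernel_mul_le_of_le hb hba hp hr ht hts hrst).trans ?_
    gcongr
    exact le_add_of_nonneg_left (yukawaKernel_nonneg _ p hs)
  · rw [mul_comm]
    refine (yukawaKernel_mul_le_of_le hb hba hp hr hs hst (by rwa [add_comm])).trans ?_
    gcongr
    exact le_add_of_nonneg_right (yukawaKernel_nonneg _ p ht)

end Pointwise

section Integral

variable {E : Type*} [NormedAddCommGroup E] [MeasurableSpace E] [BorelSpace E]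
  {μ : Measure E} {a b p : ℝ}

lemma integrable_yukawaKernel_norm [NormedSpace ℝ E] [FiniteDimensional ℝ E] [Nontrivial E]
    [μ.IsAddHaarMeasure] (ha : 0 < a) (hp : p < Module.finrank ℝ E) :
    Integrable (fun y ↦ yukawaKernel a p ‖y‖) μ := by
  rw [integrable_fun_norm_addHaar μ (f := yukawaKernel a p)]
  have radial : IntegrableOn
      (fun r : ℝ ↦ r ^ ((Module.finrank ℝ E - 1 : ℕ) - p) * Real.exp (-a * r)) (Set.Ioi 0) := by
    have exponent_gt : -1 < ((Module.finrank ℝ E - 1 : ℕ) : ℝ) - p := by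
      rw [Nat.cast_pred Module.finrank_pos]
      linarith
    simpa only [Real.rpow_one] using integrableOn_rpow_mul_exp_neg_mul_rpow exponent_gt one_pos ha
  refine radial.congr_fun (fun r hr ↦ ?_) measurableSet_Ioi
  simp only [yukawaKernel, smul_eq_mul, Real.rpow_sub hr, Real.rpow_natCast]
  ring

lemma lintegral_yukawaKernel_mul_sub_le [μ.IsAddRightInvariant] (hb : 0 ≤ b) (hba : b ≤ a)
    (hp : 0 ≤ p) {z : E} (hz : z ≠ 0) :
    ∫⁻ y, ENNReal.ofReal (yukawaKernel a p ‖y‖ * yukawaKernel a p ‖y - z‖) ∂μ ≤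
      ENNReal.ofReal (2 ^ p * yukawaKernel b p ‖z‖) *
        (2 * ∫⁻ y, ENNReal.ofReal (yukawaKernel (a - b) p ‖y‖) ∂μ) := by
  let k : E → ℝ≥0∞ := fun y ↦ ENNReal.ofReal (yukawaKernel (a - b) p ‖y‖)
  have measurable_k : Measurable k :=
    ((measurable_yukawaKernel _ p).comp measurable_norm).ennreal_ofReal
  have pointwise (y : E) :
      ENNReal.ofReal (yukawaKernel a p ‖y‖ * yukawaKernel a p ‖y - z‖) ≤
        ENNReal.ofReal (2 ^ p * yukawaKernel b p ‖z‖) * (k y + k (y - z)) := by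
    have triangle : ‖z‖ ≤ ‖y‖ + ‖y - z‖ := by simpa using norm_sub_le y (y - z)
    rw [← ENNReal.ofReal_add (yukawaKernel_nonneg _ p (norm_nonneg y))
      (yukawaKernel_nonneg _ p (norm_nonneg (y - z))), ← ENNReal.ofReal_mul
      (mul_nonneg (by positivity) (yukawaKernel_nonneg b p (norm_nonneg z)))]
    exact ENNReal.ofReal_le_ofReal (yukawaKernel_mul_le hb hba hp (norm_pos_iff.2 hz)
      (norm_nonneg y) (norm_nonneg (y - z)) triangle)
  calc _ ≤ ∫⁻ y, ENNReal.ofReal (2 ^ p * yukawaKernel b p ‖z‖) * (k y + k (y - z)) ∂μ :=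
        lintegral_mono pointwise
    _ = ENNReal.ofReal (2 ^ p * yukawaKernel b p ‖z‖) * (2 * ∫⁻ y, k y ∂μ) := by
        rw [lintegral_const_mul' _ _ ENNReal.ofReal_ne_top, lintegral_add_left measurable_k,
          lintegral_sub_right_eq_self k z, two_mul]

theorem yukawa_kernel_convolution_estimate_general [NormedSpace ℝ E] [FiniteDimensional ℝ E]
    (μ : Measure E) [μ.IsAddHaarMeasure] (hb : 0 ≤ b) (hba : b < a) (hp : 0 ≤ p)
    (hpE : p < Module.finrank ℝ E) :
    ∃ C : ℝ, 0 < C ∧ ∀ z : E, z ≠ 0 →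
      ∫⁻ y, ENNReal.ofReal (yukawaKernel a p ‖y‖ * yukawaKernel a p ‖y - z‖) ∂μ ≤
        ENNReal.ofReal (C * yukawaKernel b p ‖z‖) := by
  have : Nontrivial E :=
    Module.nontrivial_of_finrank_pos (R := ℝ) (by exact_mod_cast hp.trans_lt hpE)
  let k : E → ℝ := fun y ↦ yukawaKernel (a - b) p ‖y‖
  have integrable_k : Integrable k μ := integrable_yukawaKernel_norm (sub_pos.2 hba) hpE
  have k_nonneg (y : E) : 0 ≤ k y := yukawaKernel_nonneg _ p (norm_nonneg y)
  have integral_k_nonneg : 0 ≤ ∫ y, k y ∂μ := integral_nonneg k_nonneg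
  refine ⟨2 ^ p * (2 * (∫ y, k y ∂μ) + 1), by positivity, fun z hz ↦ ?_⟩
  have kernel_nonneg : 0 ≤ yukawaKernel b p ‖z‖ := yukawaKernel_nonneg b p (norm_nonneg z)
  calc _ ≤ ENNReal.ofReal (2 ^ p * yukawaKernel b p ‖z‖) * (2 * ∫⁻ y, ENNReal.ofReal (k y) ∂μ) :=
        lintegral_yukawaKernel_mul_sub_le hb hba.le hp hz
    _ = ENNReal.ofReal (2 ^ p * yukawaKernel b p ‖z‖ * (2 * ∫ y, k y ∂μ)) := by
        rw [← ofReal_integral_eq_lintegral_ofReal integrable_k (.of_forall k_nonneg),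
          ENNReal.ofReal_mul (q := 2 * _) (by positivity), ENNReal.ofReal_mul zero_le_two,
          ENNReal.ofReal_ofNat]
    _ ≤ ENNReal.ofReal (2 ^ p * (2 * (∫ y, k y ∂μ) + 1) * yukawaKernel b p ‖z‖) := by
        rw [mul_right_comm]
        gcongr
        exact le_add_of_nonneg_right zero_le_one

end Integral

/-- **Convolution estimate for Yukawa-type kernels.**
There is a constant `C > 0` such that for every nonzero `z ∈ ℝ³`,
`∫_{ℝ³} (e^{−|y|/2}/|y|²) (e^{−|y−z|/2}/|y−z|²) dy ≤ C e^{−|z|/4}/|z|²`. -/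
theorem yukawa_kernel_convolution_estimate :
    ∃ C : ℝ, 0 < C ∧
      ∀ z : EuclideanSpace ℝ (Fin 3), z ≠ 0 →
        ∫⁻ y, ENNReal.ofReal
            (Real.exp (-‖y‖ / 2) / ‖y‖ ^ 2 * (Real.exp (-‖y - z‖ / 2) / ‖y - z‖ ^ 2))
          ≤ ENNReal.ofReal (C * Real.exp (-‖z‖ / 4) / ‖z‖ ^ 2) := by
  simpa only [yukawaKernel_inv_two, mul_div_assoc] using
    yukawa_kernel_convolution_estimate_general (E := EuclideanSpace ℝ (Fin 3)) (a := 2⁻¹) (b := 4⁻¹)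
      (p := 2) volume (by norm_num) (by norm_num) zero_le_two (by norm_num)
end

section
/- Let H be a real Hilbert space and let S : H → H be a bounded self-adjoint linear operator satisfying 0 ≤ ⟨S x, x⟩ ≤ ‖x‖² for all x ∈ H. Then for every u ∈ H and every M ∈ ℕ, ⟨S (I − S)^M u, (I − S)^M u⟩ ≤ ‖u‖² / (M + 1). -/
open scoped RealInnerProductSpace

/-!
Write `v n = (1 - S) ^ n u` and `q n = re ⟪S (v n), v n⟫`. Expanding squares and using `S ≤ 1` at
the vector `S (v n)` shows that `q` is antitone and that each step dissipates energy,
`2 * q (n + 1) ≤ ‖v n‖ ^ 2 - ‖v (n + 1)‖ ^ 2`. Hence `2 * n * q n + ‖v n‖ ^ 2` is nonincreasing in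
`n`, and `q n ≤ ‖v n‖ ^ 2` turns this into `(2 * n + 1) * q n ≤ ‖u‖ ^ 2`.
-/

section SymmetricLeOne

open RCLike
open scoped InnerProductSpace

variable {𝕜 E : Type*} [RCLike 𝕜] [SeminormedAddCommGroup E] [InnerProductSpace 𝕜 E]
  {S : E →ₗ[𝕜] E}

theorem norm_one_sub_apply_sq (S : E →ₗ[𝕜] E) (v : E) :
    ‖(1 - S) v‖ ^ 2 = ‖v‖ ^ 2 - 2 * re ⟪S v, v⟫_𝕜 + ‖S v‖ ^ 2 := by
  rw [LinearMap.sub_apply, Module.End.one_apply, norm_sub_sq (𝕜 := 𝕜), inner_re_symm]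

theorem re_inner_map_one_sub_apply_self (hS : S.IsSymmetric) (v : E) :
    re ⟪S ((1 - S) v), (1 - S) v⟫_𝕜 =
      re ⟪S v, v⟫_𝕜 - 2 * ‖S v‖ ^ 2 + re ⟪S (S v), S v⟫_𝕜 := by
  have inner_map_map_self : re ⟪S (S v), v⟫_𝕜 = ‖S v‖ ^ 2 := by
    rw [hS, inner_self_eq_norm_sq]
  simp only [LinearMap.sub_apply, Module.End.one_apply, map_sub, inner_sub_left, inner_sub_right,
    inner_map_map_self, inner_self_eq_norm_sq]
  ring

theorem re_inner_map_one_sub_apply_self_le (hS : S.IsSymmetric)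
    (hle : ∀ x, re ⟪S x, x⟫_𝕜 ≤ ‖x‖ ^ 2) (v : E) :
    re ⟪S ((1 - S) v), (1 - S) v⟫_𝕜 ≤ re ⟪S v, v⟫_𝕜 := by
  rw [re_inner_map_one_sub_apply_self hS]
  linarith [hle (S v), sq_nonneg ‖S v‖]

theorem two_mul_re_inner_add_norm_one_sub_apply_sq_le (hS : S.IsSymmetric)
    (hle : ∀ x, re ⟪S x, x⟫_𝕜 ≤ ‖x‖ ^ 2) (v : E) :
    2 * re ⟪S ((1 - S) v), (1 - S) v⟫_𝕜 + ‖(1 - S) v‖ ^ 2 ≤ ‖v‖ ^ 2 := by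
  rw [re_inner_map_one_sub_apply_self hS, norm_one_sub_apply_sq]
  linarith [hle (S v), sq_nonneg ‖S v‖]

theorem two_mul_re_inner_add_norm_one_sub_pow_apply_sq_le (hS : S.IsSymmetric)
    (hle : ∀ x, re ⟪S x, x⟫_𝕜 ≤ ‖x‖ ^ 2) (u : E) (n : ℕ) :
    2 * n * re ⟪S (((1 - S) ^ n) u), ((1 - S) ^ n) u⟫_𝕜 + ‖((1 - S) ^ n) u‖ ^ 2 ≤ ‖u‖ ^ 2 := by
  induction n with
  | zero => simp
  | succ n ih =>
    rw [pow_succ', Module.End.mul_apply]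
    set v := ((1 - S) ^ n) u
    calc 2 * (n + 1 : ℕ) * re ⟪S ((1 - S) v), (1 - S) v⟫_𝕜 + ‖(1 - S) v‖ ^ 2
      _ = 2 * n * re ⟪S ((1 - S) v), (1 - S) v⟫_𝕜 +
            (2 * re ⟪S ((1 - S) v), (1 - S) v⟫_𝕜 + ‖(1 - S) v‖ ^ 2) := by
          push_cast
          ring
      _ ≤ 2 * n * re ⟪S v, v⟫_𝕜 + ‖v‖ ^ 2 := by
          gcongr ?_ * ?_ + ?_
          · exact re_inner_map_one_sub_apply_self_le hS hle v
          · exact two_mul_re_inner_add_norm_one_sub_apply_sq_le hS hle v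
      _ ≤ ‖u‖ ^ 2 := ih

theorem quadratic_form_decay_along_iteration_general (hS : S.IsSymmetric)
    (hle : ∀ x, re ⟪S x, x⟫_𝕜 ≤ ‖x‖ ^ 2) (u : E) (M : ℕ) :
    re ⟪S (((1 - S) ^ M) u), ((1 - S) ^ M) u⟫_𝕜 ≤ ‖u‖ ^ 2 / (2 * M + 1) := by
  rw [le_div_iff₀ (by positivity)]
  linarith [two_mul_re_inner_add_norm_one_sub_pow_apply_sq_le hS hle u M, hle (((1 - S) ^ M) u)]

end SymmetricLeOne

/-- **Decay of the quadratic form along the iteration.**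
If `S` is bounded, self-adjoint and `0 ≤ ⟨S x, x⟩ ≤ ‖x‖²` for all `x`, then for every
`u` and `M`, `⟨S (I − S)^M u, (I − S)^M u⟩ ≤ ‖u‖²/(M+1)`. -/
theorem quadratic_form_decay_along_iteration
    {H : Type*} [NormedAddCommGroup H] [InnerProductSpace ℝ H] [CompleteSpace H]
    (S : H →L[ℝ] H)
    (hsa : ∀ x y : H, ⟪S x, y⟫ = ⟪x, S y⟫)
    (hpos : ∀ x : H, 0 ≤ ⟪S x, x⟫)
    (hle : ∀ x : H, ⟪S x, x⟫ ≤ ‖x‖ ^ 2)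
    (u : H) (M : ℕ) :
    ⟪S (((1 - S) ^ M) u), ((1 - S) ^ M) u⟫ ≤ ‖u‖ ^ 2 / (M + 1) := by
  rw [← ContinuousLinearMap.coe_coe ((1 - S) ^ M), ContinuousLinearMap.toLinearMap_pow]
  refine (quadratic_form_decay_along_iteration_general (S := S.toLinearMap) hsa hle u M).trans ?_
  gcongr
  exact le_mul_of_one_le_left M.cast_nonneg one_le_two
end
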